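/- arXiv:1701.00026 — 2 statements merged into one kernel-verified Lean document; each statement's English description precedes it below -/
import Mathlib

section
/- Let R be a ring and M a right R-module. The following are equivalent: (1) M is an almost V-module; (2) every module in σ(M) is either a V-module or contains a nonzero direct summand which is a projective object in the category σ(M); (3) there exists an independent family {A_i}_{i∈I} of local submodules of M such that: (a) each A_i is both M-injective and M-projective of composition length two; (b) J(M) = ⊕_{i∈I} J(A_i); (c) M/J(M) is a V-module. -/
universe u v w

section Defs

variable (A : Type u) [Ring A]

/-- The radical of a module: the intersection of all maximal submodules
(`⊤` if there are none). -/
def modRad (M : Type w) [AddCommGroup M] [Module A M] : Submodule A M :=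
  sInf {P : Submodule A M | IsCoatom P}

/-- The socle of a module: the sum of all simple submodules. -/
def modSocle (M : Type w) [AddCommGroup M] [Module A M] : Submodule A M :=
  sSup {S : Submodule A M | IsAtom S}

/-- A submodule `N` of `M` is small if `N ⊔ K = ⊤` implies `K = ⊤`. -/
def IsSmallSubmodule {M : Type w} [AddCommGroup M] [Module A M] (N : Submodule A M) : Prop :=
  ∀ K : Submodule A M, N ⊔ K = ⊤ → K = ⊤

/-- `N` is a direct summand of `M`. -/
def IsDirectSummand {M : Type w} [AddCommGroup M] [Module A M] (N : Submodule A M) : Prop :=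
  ∃ N' : Submodule A M, IsCompl N N'

/-- `N` is an essential submodule of `M`. -/
def IsEssentialSubmodule {M : Type w} [AddCommGroup M] [Module A M] (N : Submodule A M) : Prop :=
  ∀ K : Submodule A M, K ≠ ⊥ → N ⊓ K ≠ ⊥

/-- An `I₀`-module: every non-small submodule contains a nonzero direct summand. -/
def IsI0Module (M : Type w) [AddCommGroup M] [Module A M] : Prop :=
  ∀ N : Submodule A M, ¬ IsSmallSubmodule A N →
    ∃ D : Submodule A M, D ≠ ⊥ ∧ D ≤ N ∧ IsDirectSummand A D

/-- A `V`-module: every proper submodule is an intersection of maximal submodules. -/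
def IsVModule (M : Type w) [AddCommGroup M] [Module A M] : Prop :=
  ∀ N : Submodule A M, N ≠ ⊤ →
    ∃ S : Set (Submodule A M), (∀ P ∈ S, IsCoatom P) ∧ N = sInf S

/-- A local module: it has a proper submodule containing every proper submodule. -/
def IsLocalModule (M : Type w) [AddCommGroup M] [Module A M] : Prop :=
  ∃ P : Submodule A M, P ≠ ⊤ ∧ ∀ K : Submodule A M, K ≠ ⊤ → K ≤ P

/-- A module of composition length two: it has a submodule which is simultaneously an atom
and a coatom of its submodule lattice, i.e. a composition series `0 ⋖ S ⋖ M`. -/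
def HasLengthTwo (M : Type w) [AddCommGroup M] [Module A M] : Prop :=
  ∃ S : Submodule A M, IsAtom S ∧ IsCoatom S

/-- A uniform module: nonzero, and any two nonzero submodules intersect nontrivially. -/
def IsUniformModule (M : Type w) [AddCommGroup M] [Module A M] : Prop :=
  Nontrivial M ∧ ∀ K L : Submodule A M, K ≠ ⊥ → L ≠ ⊥ → K ⊓ L ≠ ⊥

/-- A uniserial module: submodules are linearly ordered by inclusion. -/
def IsUniserialModule (M : Type w) [AddCommGroup M] [Module A M] : Prop :=
  ∀ K L : Submodule A M, K ≤ L ∨ L ≤ K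

/-- A semiartinian module: every nonzero quotient has a nonzero socle. -/
def IsSemiartinianModule (M : Type w) [AddCommGroup M] [Module A M] : Prop :=
  ∀ N : Submodule A M, N ≠ ⊤ → modSocle A (M ⧸ N) ≠ ⊥

/-- `U` is `M`-injective: homomorphisms from submodules of `M` to `U` extend to `M`. -/
def RelInjective (M : Type v) (U : Type w) [AddCommGroup M] [Module A M]
    [AddCommGroup U] [Module A U] : Prop :=
  ∀ (K : Submodule A M) (f : K →ₗ[A] U), ∃ g : M →ₗ[A] U, ∀ x : K, g (x : M) = f x

/-- `P` is `M`-projective: homomorphisms from `P` to quotients of `M` lift to `M`. -/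
def RelProjective (M : Type v) (P : Type w) [AddCommGroup M] [Module A M]
    [AddCommGroup P] [Module A P] : Prop :=
  ∀ (K : Submodule A M) (f : P →ₗ[A] M ⧸ K), ∃ h : P →ₗ[A] M, ∀ x : P, K.mkQ (h x) = f x

/-- `M` is almost `N`-projective. -/
def AlmostNProjective (M : Type v) (N : Type w) [AddCommGroup M] [Module A M]
    [AddCommGroup N] [Module A N] : Prop :=
  ∀ (K : Submodule A N) (f : M →ₗ[A] N ⧸ K),
    (∃ h : M →ₗ[A] N, ∀ x : M, K.mkQ (h x) = f x) ∨
    (∃ N' : Submodule A N, N' ≠ ⊥ ∧ IsDirectSummand A N' ∧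
      ∃ h' : N' →ₗ[A] M, ∀ x : N', K.mkQ (x : N) = f (h' x))

/-- `M` is almost projective: almost `N`-projective for every module `N`. -/
def IsAlmostProjective (M : Type w) [AddCommGroup M] [Module A M] : Prop :=
  ∀ (N : Type v) [AddCommGroup N] [Module A N], AlmostNProjective A M N

/-- `M` is almost `N`-injective. -/
def AlmostNInjective (M : Type v) (N : Type w) [AddCommGroup M] [Module A M]
    [AddCommGroup N] [Module A N] : Prop :=
  ∀ (N₀ : Submodule A N) (f : N₀ →ₗ[A] M),
    (∃ g : N →ₗ[A] M, ∀ x : N₀, g (x : N) = f x) ∨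
    (∃ π : Module.End A N, IsIdempotentElem π ∧ π ≠ 0 ∧
      ∃ h : M →ₗ[A] LinearMap.range π, ∀ x : N₀, (↑(h (f x)) : N) = π (x : N))

/-- `M` is almost injective: almost `N`-injective for every module `N`. -/
def IsAlmostInjective (M : Type w) [AddCommGroup M] [Module A M] : Prop :=
  ∀ (N : Type v) [AddCommGroup N] [Module A N], AlmostNInjective A M N

/-- `N` belongs to `σ(M)`: `N` is isomorphic to a submodule of a quotient of a direct sum
of copies of `M`. -/
def InSigma (M : Type v) [AddCommGroup M] [Module A M]
    (N : Type w) [AddCommGroup N] [Module A N] : Prop :=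
  ∃ (ι : Type v) (K : Submodule A (ι →₀ M)) (P : Submodule A ((ι →₀ M) ⧸ K)),
    Nonempty (N ≃ₗ[A] P)

/-- `P` is a projective object of the category `σ(M)`. -/
def ProjInSigma (M : Type v) [AddCommGroup M] [Module A M]
    (P : Type w) [AddCommGroup P] [Module A P] : Prop :=
  InSigma A M P ∧
  ∀ (X Y : Type v) [AddCommGroup X] [Module A X] [AddCommGroup Y] [Module A Y],
    InSigma A M X → InSigma A M Y →
    ∀ (g : X →ₗ[A] Y), Function.Surjective g →
    ∀ f : P →ₗ[A] Y, ∃ h : P →ₗ[A] X, ∀ x : P, g (h x) = f x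

/-- `M` is an almost `V`-module: every simple module is almost `N`-injective
for every `N ∈ σ(M)`. -/
def IsAlmostVModule (M : Type v) [AddCommGroup M] [Module A M] : Prop :=
  ∀ (S : Type v) [AddCommGroup S] [Module A S], IsSimpleModule A S →
    ∀ (N : Type v) [AddCommGroup N] [Module A N], InSigma A M N → AlmostNInjective A S N

end Defs

/-!
Call a module cocyclic if it has a least nonzero submodule, its monolith. All three conditions say
that every nonsimple cocyclic module in `σ(M)` is projective in `σ(M)`, so that every epimorphism
onto such a module splits.

Under this condition let `X ∈ σ(M)` be nonsimple and cocyclic. An epimorphism from `X` that kills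
the monolith cannot split, so cocyclic quotients of `X` by nonzero submodules are simple, and an
endomorphism of `X` killing the monolith has square zero. Splitting the projection onto a cocyclic
quotient of the direct limit of `X → X → ⋯` along an injective endomorphism shows that this
endomorphism is bijective. Then `X` is not a sum of two proper submodules, which together with the
simplicity of its cocyclic quotients makes `X` local of length two. A homomorphism from a submodule
of `M` to `X` extends because the pushout has a cocyclic quotient containing `X`, which has length
two as well and hence equals `X`.

A maximal independent family of nonsimple cocyclic submodules of `M` therefore satisfies (3).
Conversely, given such a family, every nonsimple cocyclic module in `σ(M)` embeds in an
`M`-generated one, on which some map from `M` does not vanish on some `J(Aᵢ)`; this map embeds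
`Aᵢ`, and injectivity of `Aᵢ` makes the embedding an isomorphism.
-/

section LinearAlgebra

variable {A : Type u} [Ring A]
variable {X Y Z : Type*} [AddCommGroup X] [Module A X] [AddCommGroup Y] [Module A Y]
  [AddCommGroup Z] [Module A Z]

lemma exists_comp_eq_of_ker_le {g : X →ₗ[A] Y} (hg : Function.Surjective g) {k : X →ₗ[A] Z}
    (h : LinearMap.ker g ≤ LinearMap.ker k) : ∃ k' : Y →ₗ[A] Z, k' ∘ₗ g = k := by
  refine ⟨(LinearMap.ker g).liftQ k h ∘ₗ (g.quotKerEquivOfSurjective hg).symm, ?_⟩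
  ext x
  have hx : (g.quotKerEquivOfSurjective hg).symm (g x) = (LinearMap.ker g).mkQ x := by
    rw [LinearEquiv.symm_apply_eq]; rfl
  simp [hx]

lemma exists_section_of_isIdempotentElem {p : Module.End A X} (hp : IsIdempotentElem p)
    {g : X →ₗ[A] Y} (hg : Function.Surjective g) (hker : LinearMap.ker g = LinearMap.ker p) :
    ∃ h : Y →ₗ[A] X, g ∘ₗ h = LinearMap.id := by
  obtain ⟨h, hh⟩ := exists_comp_eq_of_ker_le hg hker.le
  have hgp : g ∘ₗ p = g := by
    ext x
    have hx : p x - x ∈ LinearMap.ker g := by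
      rw [hker, LinearMap.mem_ker, map_sub, sub_eq_zero]
      exact LinearMap.congr_fun hp x
    simpa [sub_eq_zero] using hx
  refine ⟨h, (LinearMap.cancel_right hg).1 ?_⟩
  rw [LinearMap.comp_assoc, hh, hgp, LinearMap.id_comp]

lemma isCompl_range_ker_of_comp_eq_id {g : X →ₗ[A] Y} {h : Y →ₗ[A] X}
    (hgh : g ∘ₗ h = LinearMap.id) : IsCompl (LinearMap.range h) (LinearMap.ker g) := by
  have hg : Function.Surjective g := fun y => ⟨h y, LinearMap.congr_fun hgh y⟩
  have hh : LinearMap.ker h = ⊥ := LinearMap.ker_eq_bot_of_inverse hgh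
  have hidem : IsIdempotentElem (h ∘ₗ g : Module.End A X) :=
    LinearMap.ext fun x => congrArg h (LinearMap.congr_fun hgh (g x))
  have hcompl := LinearMap.IsIdempotentElem.isCompl hidem
  rwa [LinearMap.range_comp_of_range_eq_top h (LinearMap.range_eq_top.2 hg),
    LinearMap.ker_comp_of_ker_eq_bot g hh] at hcompl

lemma isSimpleModule_of_injective [Nontrivial X] [IsSimpleModule A Y] (g : X →ₗ[A] Y)
    (hg : Function.Injective g) : IsSimpleModule A X := by
  have hg0 : g ≠ 0 := fun h => not_subsingleton X ⟨fun x y => hg (by simp [h])⟩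
  exact .congr (.ofBijective g ⟨hg, LinearMap.surjective_of_ne_zero hg0⟩)

lemma isSimpleModule_of_surjective [IsSimpleModule A X] [Nontrivial Y] (g : X →ₗ[A] Y)
    (hg : Function.Surjective g) : IsSimpleModule A Y := by
  have hg0 : g ≠ 0 := fun h => not_subsingleton Y
    ⟨fun x y => by obtain ⟨x, rfl⟩ := hg x; obtain ⟨y, rfl⟩ := hg y; simp [h]⟩
  exact .congr (LinearEquiv.ofBijective g ⟨LinearMap.injective_of_ne_zero hg0, hg⟩).symm

end LinearAlgebra

/-- `s` generates the *monolith* of `X`, its least nonzero submodule. A module with a monolith is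
called cocyclic (or subdirectly irreducible). -/
def IsMonolithGenerator (A : Type u) [Ring A] {X : Type w} [AddCommGroup X] [Module A X]
    (s : X) : Prop :=
  s ≠ 0 ∧ ∀ D : Submodule A X, D ≠ ⊥ → s ∈ D

namespace IsMonolithGenerator

open Submodule

variable {A : Type u} [Ring A]
variable {X Y Z : Type*} [AddCommGroup X] [Module A X] [AddCommGroup Y] [Module A Y]
  [AddCommGroup Z] [Module A Z] {s : X}

lemma nontrivial (hs : IsMonolithGenerator A s) : Nontrivial X :=
  ⟨s, 0, hs.1⟩

lemma span_le (hs : IsMonolithGenerator A s) {D : Submodule A X} (hD : D ≠ ⊥) : span A {s} ≤ D :=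
  (span_singleton_le_iff_mem _ _).2 (hs.2 D hD)

lemma eq_bot_of_notMem (hs : IsMonolithGenerator A s) {D : Submodule A X} (hD : s ∉ D) : D = ⊥ :=
  by_contra fun h => hD (hs.2 D h)

lemma exists_smul_eq (hs : IsMonolithGenerator A s) {x : X} (hx : x ≠ 0) : ∃ a : A, a • x = s :=
  mem_span_singleton.1 (hs.2 (span A {x}) (by simpa using hx))

lemma injective (hs : IsMonolithGenerator A s) {g : X →ₗ[A] Y} (hg : g s ≠ 0) :
    Function.Injective g :=
  LinearMap.ker_eq_bot.1 (hs.eq_bot_of_notMem hg)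

lemma injective_of_comp [Nontrivial Y] (hs : IsMonolithGenerator A s) {g : X →ₗ[A] Z}
    {f : Y →ₗ[A] X} (hgf : Function.Injective (g ∘ₗ f)) : Function.Injective g := by
  refine hs.injective fun hgs => ?_
  have hf : LinearMap.range f ≠ ⊥ := fun h =>
    not_subsingleton Y ⟨fun x y => hgf (by simp [LinearMap.range_eq_bot.1 h])⟩
  obtain ⟨y, rfl⟩ := hs.2 _ hf
  have hy : y = 0 := hgf (by simpa using hgs)
  exact hs.1 (by rw [hy, map_zero])

lemma le_ker (hs : IsMonolithGenerator A s) {g : Y →ₗ[A] X} {D : Submodule A Y}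
    (h : s ∉ D.map g) : D ≤ LinearMap.ker g :=
  (map_le_iff_le_comap).1 (hs.eq_bot_of_notMem h).le

lemma comap (hs : IsMonolithGenerator A s) {g : Y →ₗ[A] X} (hg : Function.Injective g) {y : Y}
    (hy : g y = s) : IsMonolithGenerator A y := by
  refine ⟨fun h => hs.1 (by rw [← hy, h, map_zero]), fun D hD => ?_⟩
  have hDg : D.map g ≠ ⊥ := by rwa [Ne, (map_injective_of_injective hg).eq_iff' (map_bot g)]
  have hsD : s ∈ D.map g := hs.2 _ hDg
  rwa [← hy, ← mem_comap, comap_map_eq_of_injective hg] at hsD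

lemma exists_of_injective [Nontrivial Y] (hs : IsMonolithGenerator A s) {g : Y →ₗ[A] X}
    (hg : Function.Injective g) : ∃ t : Y, g t = s ∧ IsMonolithGenerator A t := by
  obtain ⟨y, hy⟩ := exists_ne (0 : Y)
  obtain ⟨a, ha⟩ := hs.exists_smul_eq ((map_ne_zero_iff g hg).2 hy)
  exact ⟨a • y, by rw [map_smul, ha], hs.comap hg (by rw [map_smul, ha])⟩

lemma isSimpleModule_iff (hs : IsMonolithGenerator A s) : IsSimpleModule A X ↔ span A {s} = ⊤ := by
  refine ⟨fun _ => IsSimpleModule.span_singleton_eq_top A hs.1, fun h => ?_⟩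
  rw [_root_.isSimpleModule_iff]
  have := hs.nontrivial
  exact ⟨fun D => or_iff_not_imp_left.2 fun hD => top_le_iff.1 (h ▸ hs.span_le hD)⟩

lemma isSimpleModule_span (hs : IsMonolithGenerator A s) : IsSimpleModule A (span A {s}) := by
  have ht : IsMonolithGenerator A (⟨s, mem_span_singleton_self s⟩ : span A {s}) :=
    hs.comap (subtype_injective _) rfl
  refine ht.isSimpleModule_iff.2 (eq_top_iff'.2 ?_)
  rintro ⟨x, hx⟩
  obtain ⟨a, rfl⟩ := mem_span_singleton.1 hx
  exact mem_span_singleton.2 ⟨a, rfl⟩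

lemma range_le_span (hs : IsMonolithGenerator A s) [IsSimpleModule A Y] (g : Y →ₗ[A] X) :
    LinearMap.range g ≤ span A {s} := by
  rcases eq_or_ne g 0 with rfl | hg
  · simp
  have hinj := LinearMap.injective_of_ne_zero hg
  have := IsSimpleModule.nontrivial A Y
  obtain ⟨t, hts, ht⟩ := hs.exists_of_injective hinj
  rw [LinearMap.range_eq_map, ← ht.isSimpleModule_iff.1 ‹_›, map_span, Set.image_singleton, hts]

lemma apply_mem_modRad (hs : IsMonolithGenerator A s) (hX : ¬ IsSimpleModule A X)
    (g : X →ₗ[A] Y) : g s ∈ modRad A Y := by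
  rw [modRad, mem_sInf]
  intro P hP
  by_contra hsP
  have := hs.nontrivial
  have := isSimpleModule_iff_isCoatom.2 hP
  exact hX (isSimpleModule_of_injective (P.mkQ ∘ₗ g) (hs.injective (by simpa using hsP)))

lemma range_le_modRad (hs : IsMonolithGenerator A s) (hX : ¬ IsSimpleModule A X)
    [IsSimpleModule A Y] (g : Y →ₗ[A] X) : LinearMap.range g ≤ modRad A X :=
  (hs.range_le_span g).trans
    ((span_singleton_le_iff_mem _ _).2 (hs.apply_mem_modRad hX LinearMap.id))

end IsMonolithGenerator

section Zorn

variable {A : Type u} [Ring A] {X : Type*} [AddCommGroup X] [Module A X]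

lemma exists_le_isMonolithGenerator_mkQ {B : Submodule A X} {x : X} (hx : x ∉ B) :
    ∃ C : Submodule A X, B ≤ C ∧ IsMonolithGenerator A (C.mkQ x) := by
  obtain ⟨C, hBC, hC⟩ := zorn_le_nonempty₀ {C : Submodule A X | x ∉ C} (fun c hc hchain D hD => by
    refine ⟨sSup c, fun hxc => ?_, fun _ => le_sSup⟩
    obtain ⟨E, hE, hxE⟩ := (Submodule.mem_sSup_of_directed ⟨D, hD⟩ hchain.directedOn).1 hxc
    exact hc hE hxE) B hx
  refine ⟨C, hBC, by simpa using hC.prop, fun D hD => by_contra fun hxD => hD ?_⟩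
  have hDC : D.comap C.mkQ ≤ C := hC.le_of_ge hxD (C.le_comap_mkQ D)
  rwa [← Submodule.map_comap_eq_of_surjective C.mkQ_surjective D, ← le_bot_iff,
    Submodule.map_le_iff_le_comap, ← LinearMap.ker, Submodule.ker_mkQ]

end Zorn

section VModule

variable {A : Type u} [Ring A]
variable {N Y : Type*} [AddCommGroup N] [Module A N] [AddCommGroup Y] [Module A Y]

lemma IsVModule.isSimpleModule (hN : IsVModule A N) {g : N →ₗ[A] Y} (hg : Function.Surjective g)
    {s : Y} (hs : IsMonolithGenerator A s) : IsSimpleModule A Y := by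
  obtain ⟨n, rfl⟩ := hg s
  have hker : LinearMap.ker g ≠ ⊤ := fun h =>
    hs.1 (LinearMap.mem_ker.1 (h ▸ Submodule.mem_top))
  obtain ⟨S, hS, hinf⟩ := hN _ hker
  have hn : n ∉ sInf S := hinf ▸ hs.1
  simp only [Submodule.mem_sInf, not_forall] at hn
  obtain ⟨P, hPS, hnP⟩ := hn
  have hkerP : LinearMap.ker g ≤ P := hinf.trans_le (sInf_le hPS)
  have hPker : P ≤ LinearMap.ker g := hs.le_ker fun h => by
    rw [← Submodule.mem_comap, Submodule.comap_map_eq, sup_eq_left.2 hkerP] at h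
    exact hnP h
  have : IsSimpleModule A (N ⧸ LinearMap.ker g) :=
    isSimpleModule_iff_isCoatom.2 (hkerP.antisymm hPker ▸ hS P hPS)
  exact .congr (g.quotKerEquivOfSurjective hg).symm

lemma isVModule_of_isSimpleModule_quotient (h : ∀ (C : Submodule A N) (x : N),
    IsMonolithGenerator A (C.mkQ x) → IsSimpleModule A (N ⧸ C)) : IsVModule A N := by
  refine fun B _ => ⟨{P | IsCoatom P ∧ B ≤ P}, fun P hP => hP.1, ?_⟩
  refine le_antisymm (le_sInf fun P hP => hP.2) fun x hx => by_contra fun hxB => ?_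
  obtain ⟨C, hBC, hxC⟩ := exists_le_isMonolithGenerator_mkQ hxB
  have hC : IsCoatom C := isSimpleModule_iff_isCoatom.1 (h C x hxC)
  exact hxC.1 ((Submodule.Quotient.mk_eq_zero C).2 ((Submodule.mem_sInf.1 hx) C ⟨hC, hBC⟩))

end VModule

section Pushout

variable {A : Type u} [Ring A] {N : Type v} {T : Type w}
variable [AddCommGroup N] [Module A N] [AddCommGroup T] [Module A T] {K : Submodule A N}

lemma exists_cocyclic_pushout (f : K →ₗ[A] T) {s : T} (hs : IsMonolithGenerator A s) :
    ∃ (Y : Type (max v w)) (_ : AddCommGroup Y) (_ : Module A Y) (k : N →ₗ[A] Y) (j : T →ₗ[A] Y),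
      k ∘ₗ K.subtype = j ∘ₗ f ∧ Function.Surjective (k.coprod j) ∧
        IsMonolithGenerator A (j s) := by
  have hsB : ((0, s) : N × T) ∉ LinearMap.range (K.subtype.prod (-f)) := by
    rintro ⟨y, hy⟩
    simp only [LinearMap.prod_apply, Function.prod_apply, Prod.mk.injEq,
      Submodule.subtype_apply, ZeroMemClass.coe_eq_zero] at hy
    obtain ⟨rfl, rfl⟩ := hy
    exact hs.1 (map_zero _)
  obtain ⟨C, hBC, hC⟩ := exists_le_isMonolithGenerator_mkQ hsB
  refine ⟨(N × T) ⧸ C, inferInstance, inferInstance, C.mkQ ∘ₗ .inl A N T, C.mkQ ∘ₗ .inr A N T,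
    ?_, ?_, hC⟩
  · ext y
    refine (Submodule.Quotient.eq C).2 (hBC ⟨y, ?_⟩)
    simp
  · rw [← LinearMap.comp_coprod, LinearMap.coprod_inl_inr]
    exact C.mkQ_surjective

lemma exists_extension_of_bijective {Y : Type*} [AddCommGroup Y] [Module A Y] {f : K →ₗ[A] T}
    {k : N →ₗ[A] Y} {j : T →ₗ[A] Y} (hkj : k ∘ₗ K.subtype = j ∘ₗ f) (hj : Function.Bijective j) :
    ∃ g : N →ₗ[A] T, ∀ x : K, g x = f x :=
  ⟨(LinearEquiv.ofBijective j hj).symm ∘ₗ k, fun x =>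
    (LinearEquiv.symm_apply_eq _).2 (LinearMap.congr_fun hkj x)⟩

lemma isMonolithGenerator_of_isSimpleModule [IsSimpleModule A T] {s : T} (hs : s ≠ 0) :
    IsMonolithGenerator A s :=
  ⟨hs, fun D hD => (eq_bot_or_eq_top D).resolve_left hD ▸ Submodule.mem_top⟩

lemma exists_extension_or_nonsimple_cocyclic_quotient [IsSimpleModule A T] (f : K →ₗ[A] T) :
    (∃ g : N →ₗ[A] T, ∀ x : K, g x = f x) ∨
      ∃ (Y : Type (max v w)) (_ : AddCommGroup Y) (_ : Module A Y) (k : N →ₗ[A] Y)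
        (j : T →ₗ[A] Y) (t : Y), k ∘ₗ K.subtype = j ∘ₗ f ∧ Function.Surjective k ∧
          IsMonolithGenerator A t ∧ ¬ IsSimpleModule A Y := by
  rcases eq_or_ne f 0 with rfl | hf
  · exact .inl ⟨0, fun _ => rfl⟩
  have := IsSimpleModule.nontrivial A T
  obtain ⟨s, hs⟩ := exists_ne (0 : T)
  obtain ⟨Y, _, _, k, j, hkj, hY, hjs⟩ :=
    exists_cocyclic_pushout f (isMonolithGenerator_of_isSimpleModule hs)
  have hjk : LinearMap.range j ≤ LinearMap.range k := by
    rw [← LinearMap.range_comp_of_range_eq_top j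
      (LinearMap.range_eq_top.2 (LinearMap.surjective_of_ne_zero hf)), ← hkj]
    exact LinearMap.range_comp_le_range _ _
  have hk : Function.Surjective k := by
    rw [← LinearMap.range_eq_top, LinearMap.range_coprod, sup_eq_left.2 hjk] at hY
    exact LinearMap.range_eq_top.1 hY
  by_cases hsimple : IsSimpleModule A Y
  · have hj : j ≠ 0 := fun h => hjs.1 (by simp [h])
    exact .inl (exists_extension_of_bijective hkj (LinearMap.bijective_of_ne_zero hj))
  · exact .inr ⟨Y, _, _, k, j, j s, hkj, hk, hjs, hsimple⟩

lemma IsVModule.relInjective (hN : IsVModule A N) [IsSimpleModule A T] : RelInjective A N T := by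
  intro K f
  refine (exists_extension_or_nonsimple_cocyclic_quotient f).resolve_right ?_
  rintro ⟨Y, _, _, k, j, t, -, hk, ht, hY⟩
  exact hY (hN.isSimpleModule hk ht)

end Pushout

section Sigma

variable {A : Type u} [Ring A] {M : Type v} [AddCommGroup M] [Module A M]
variable {N L Q : Type*} [AddCommGroup N] [Module A N] [AddCommGroup L] [Module A L]
  [AddCommGroup Q] [Module A Q]

lemma inSigma_of_subquotient {ι : Type*} [Small.{v} ι] {j : Q →ₗ[A] ι →₀ M}
    (hj : Function.Injective j) {g : Q →ₗ[A] N} (hg : Function.Surjective g) : InSigma A M N := by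
  let e : (ι →₀ M) ≃ₗ[A] (Shrink.{v} ι →₀ M) := Finsupp.domLCongr (equivShrink ι)
  let i : Q →ₗ[A] Shrink.{v} ι →₀ M := e ∘ₗ j
  have hi : Function.Injective i := e.injective.comp hj
  let K := (LinearMap.ker g).map i
  have hker : LinearMap.ker (K.mkQ ∘ₗ i) = LinearMap.ker g := by
    rw [LinearMap.ker_comp, Submodule.ker_mkQ, Submodule.comap_map_eq_of_injective hi]
  obtain ⟨t, ht⟩ := exists_comp_eq_of_ker_le hg hker.ge
  have htinj : Function.Injective t := by
    rw [← LinearMap.ker_eq_bot, ← Submodule.map_comap_eq_of_surjective hg (LinearMap.ker t),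
      ← LinearMap.ker_comp, ht, hker]
    exact LinearMap.le_ker_iff_map.1 le_rfl
  exact ⟨_, K, LinearMap.range t, ⟨.ofInjective t htinj⟩⟩

lemma InSigma.exists_subquotient (h : InSigma A M N) :
    ∃ (ι : Type v) (Q : Submodule A (ι →₀ M)) (g : Q →ₗ[A] N), Function.Surjective g := by
  obtain ⟨ι, K, P, ⟨e⟩⟩ := h
  refine ⟨ι, P.comap K.mkQ, e.symm ∘ₗ K.mkQ.restrict fun _ => id,
    e.symm.surjective.comp fun p => ?_⟩
  obtain ⟨x, hx⟩ := K.mkQ_surjective p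
  exact ⟨⟨x, by simp [hx]⟩, Subtype.ext hx⟩

lemma InSigma.of_surjective (h : InSigma A M N) {g : N →ₗ[A] L} (hg : Function.Surjective g) :
    InSigma A M L := by
  obtain ⟨ι, Q, k, hk⟩ := h.exists_subquotient
  exact inSigma_of_subquotient Q.subtype_injective (g := g ∘ₗ k) (hg.comp hk)

lemma InSigma.of_injective (h : InSigma A M N) {g : L →ₗ[A] N} (hg : Function.Injective g) :
    InSigma A M L := by
  obtain ⟨ι, K, P, ⟨e⟩⟩ := h
  let i : L →ₗ[A] (ι →₀ M) ⧸ K := P.subtype ∘ₗ e ∘ₗ g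
  have hi : Function.Injective i := P.subtype_injective.comp (e.injective.comp hg)
  exact ⟨ι, K, LinearMap.range i, ⟨.ofInjective i hi⟩⟩

lemma InSigma.prod (hN : InSigma A M N) (hL : InSigma A M L) : InSigma A M (N × L) := by
  obtain ⟨ι, Q, k, hk⟩ := hN.exists_subquotient
  obtain ⟨κ, P, l, hl⟩ := hL.exists_subquotient
  let e : ((ι →₀ M) × (κ →₀ M)) ≃ₗ[A] (ι ⊕ κ →₀ M) :=
    (Finsupp.sumFinsuppLEquivProdFinsupp A).symm
  exact inSigma_of_subquotient (j := e.toLinearMap ∘ₗ Q.subtype.prodMap P.subtype)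
    (e.injective.comp (Q.subtype_injective.prodMap P.subtype_injective))
    (g := k.prodMap l) (hk.prodMap hl)

lemma InSigma.finsupp (h : InSigma A M N) (κ : Type*) [Small.{v} κ] : InSigma A M (κ →₀ N) := by
  obtain ⟨ι, Q, k, hk⟩ := h.exists_subquotient
  let e : (κ →₀ ι →₀ M) ≃ₗ[A] (κ × ι →₀ M) := (Finsupp.curryLinearEquiv A).symm
  let i : (κ →₀ Q) →ₗ[A] (κ →₀ ι →₀ M) := Finsupp.mapRange.linearMap Q.subtype
  let g : (κ →₀ Q) →ₗ[A] (κ →₀ N) := Finsupp.mapRange.linearMap k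
  have hi : Function.Injective i :=
    Finsupp.mapRange_injective _ (map_zero _) Q.subtype_injective
  have hg : Function.Surjective g := Finsupp.mapRange_surjective _ (map_zero _) hk
  have hei : Function.Injective (e.toLinearMap ∘ₗ i) := e.injective.comp hi
  exact inSigma_of_subquotient (Q := κ →₀ Q) hei hg

variable (A M) in
lemma InSigma.self : InSigma A M M :=
  inSigma_of_subquotient (Finsupp.single_injective ()) (j := Finsupp.lsingle ())
    (g := LinearMap.id) Function.surjective_id

end Sigma

section Projective

variable {A : Type u} [Ring A] {M : Type v} [AddCommGroup M] [Module A M]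
variable {U Q L : Type*} [AddCommGroup U] [Module A U] [AddCommGroup Q] [Module A Q]
  [AddCommGroup L] [Module A L]

lemma RelProjective.exists_lift (hU : RelProjective A M U) {g : M →ₗ[A] Q} {f : U →ₗ[A] Q}
    (hf : LinearMap.range f ≤ LinearMap.range g) : ∃ h : U →ₗ[A] M, g ∘ₗ h = f := by
  obtain ⟨h, hh⟩ := hU (LinearMap.ker g)
    (g.quotKerEquivRange.symm ∘ₗ f.codRestrict _ fun x => hf ⟨x, rfl⟩)
  refine ⟨h, LinearMap.ext fun x => ?_⟩
  exact congrArg Subtype.val ((LinearEquiv.eq_symm_apply _).1 (hh x))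

lemma RelProjective.of_surjective (hU : RelProjective A M U) {g : M →ₗ[A] Q}
    (hg : Function.Surjective g) : RelProjective A Q U := by
  intro K f
  have hK : LinearMap.range (K.mkQ ∘ₗ g) = ⊤ :=
    LinearMap.range_eq_top.2 (K.mkQ_surjective.comp hg)
  obtain ⟨h, hh⟩ := hU.exists_lift (hK ▸ le_top : LinearMap.range f ≤ _)
  exact ⟨g ∘ₗ h, LinearMap.congr_fun hh⟩

lemma RelProjective.of_injective (hU : RelProjective A M U) {i : L →ₗ[A] M}
    (hi : Function.Injective i) : RelProjective A L U := by
  intro K f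
  let j : L ⧸ K →ₗ[A] M ⧸ K.map i := K.mapQ _ i (Submodule.le_comap_map i K)
  have hj : Function.Injective j := by
    rw [← LinearMap.ker_eq_bot, Submodule.ker_mapQ, Submodule.comap_map_eq_of_injective hi]
    exact K.mkQ_map_self
  obtain ⟨h, hh⟩ := hU (K.map i) (j ∘ₗ f)
  have hrange : ∀ u, h u ∈ LinearMap.range i := fun u => by
    obtain ⟨l, hl⟩ := K.mkQ_surjective (f u)
    have hul : (K.map i).mkQ (h u) = (K.map i).mkQ (i l) := (hh u).trans (congrArg j hl.symm)
    obtain ⟨k, -, hk⟩ := (Submodule.Quotient.eq _).1 hul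
    exact ⟨k + l, by rw [map_add, hk, sub_add_cancel]⟩
  let e := LinearEquiv.ofInjective i hi
  refine ⟨e.symm ∘ₗ h.codRestrict _ hrange, fun u => hj ?_⟩
  have hu : i (e.symm (h.codRestrict _ hrange u)) = h u :=
    congrArg Subtype.val (e.apply_symm_apply (h.codRestrict _ hrange u))
  exact (congrArg (K.map i).mkQ hu).trans (hh u)

lemma RelProjective.exists_finsupp_lift (hU : RelProjective A M U) {ι : Type*}
    (q : ι → M →ₗ[A] Q) (s : Finset ι) {f : U →ₗ[A] Q}
    (hf : LinearMap.range f ≤ ⨆ i ∈ s, LinearMap.range (q i)) :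
    ∃ h : U →ₗ[A] ι →₀ M, Finsupp.lsum ℕ q ∘ₗ h = f := by
  classical
  induction s using Finset.induction_on generalizing f with
  | empty =>
    have hf0 : f = 0 := LinearMap.range_eq_bot.1 (by simpa using hf)
    exact ⟨0, hf0 ▸ LinearMap.comp_zero _⟩
  | insert j s _ ih =>
    let B : Submodule A Q := ⨆ i ∈ s, LinearMap.range (q i)
    have hB : LinearMap.range (B.mkQ ∘ₗ f) ≤ LinearMap.range (B.mkQ ∘ₗ q j) := by
      rw [Finset.iSup_insert] at hf
      rw [LinearMap.range_comp, LinearMap.range_comp]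
      refine (Submodule.map_mono hf).trans ?_
      rw [Submodule.map_sup, B.mkQ_map_self, sup_bot_eq]
    obtain ⟨h, hh⟩ := hU.exists_lift hB
    have hfh : LinearMap.range (f - q j ∘ₗ h) ≤ B := by
      rw [← B.ker_mkQ, LinearMap.range_le_ker_iff, LinearMap.comp_sub, ← LinearMap.comp_assoc, hh,
        sub_self]
    obtain ⟨h', hh'⟩ := ih hfh
    have hj : Finsupp.lsum ℕ q ∘ₗ Finsupp.lsingle j = q j := by ext; simp
    refine ⟨h' + Finsupp.lsingle j ∘ₗ h, ?_⟩
    rw [LinearMap.comp_add, hh', ← LinearMap.comp_assoc, hj, sub_add_cancel]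

lemma RelProjective.finsupp [Module.Finite A U] (hU : RelProjective A M U) (ι : Type*) :
    RelProjective A (ι →₀ M) U := by
  intro K f
  let q : ι → M →ₗ[A] (ι →₀ M) ⧸ K := fun i => K.mkQ ∘ₗ Finsupp.lsingle i
  have hq : Finsupp.lsum ℕ q = K.mkQ := Finsupp.lhom_ext fun i m => by simp [q]
  have hsup : LinearMap.range f ≤ ⨆ i, LinearMap.range (q i) := by
    simp only [q, LinearMap.range_comp, ← Submodule.map_iSup, Finsupp.iSup_lsingle_range,
      Submodule.map_top, Submodule.range_mkQ, le_top]
  have hfg : (LinearMap.range f).FG := Submodule.FG.of_finite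
  obtain ⟨s, hs⟩ := CompleteLattice.IsCompactElement.exists_finset_of_le_iSup _
    ((Submodule.fg_iff_compact _).1 hfg) _ hsup
  obtain ⟨h, hh⟩ := hU.exists_finsupp_lift q s hs
  exact ⟨h, LinearMap.congr_fun (hq ▸ hh)⟩

lemma RelProjective.of_inSigma [Module.Finite A U] (hU : RelProjective A M U)
    (hQ : InSigma A M Q) : RelProjective A Q U := by
  obtain ⟨ι, W, g, hg⟩ := hQ.exists_subquotient
  exact ((hU.finsupp ι).of_injective W.subtype_injective).of_surjective hg

lemma RelProjective.projInSigma [Module.Finite A U] (hU : RelProjective A M U)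
    (hσ : InSigma A M U) : ProjInSigma A M U := by
  refine ⟨hσ, fun X Y _ _ _ _ hX _ g hg f => ?_⟩
  obtain ⟨h, hh⟩ := (hU.of_inSigma hX).exists_lift (f := f) (g := g)
    (LinearMap.range_eq_top.2 hg ▸ le_top)
  exact ⟨h, LinearMap.congr_fun hh⟩

lemma ProjInSigma.relProjective (hU : ProjInSigma A M U) : RelProjective A M U := fun K f =>
  hU.2 M (M ⧸ K) (.self A M) ((InSigma.self A M).of_surjective K.mkQ_surjective) K.mkQ
    K.mkQ_surjective f

lemma ProjInSigma.of_equiv (hU : ProjInSigma A M U) (e : U ≃ₗ[A] L) : ProjInSigma A M L := by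
  refine ⟨hU.1.of_surjective e.surjective, fun X Y _ _ _ _ hX hY g hg f => ?_⟩
  obtain ⟨h, hh⟩ := hU.2 X Y hX hY g hg (f ∘ₗ e)
  exact ⟨h ∘ₗ e.symm, fun x => by simp [hh]⟩

lemma ProjInSigma.exists_section {X N : Type v} [AddCommGroup X] [Module A X] [AddCommGroup N]
    [Module A N] (hX : ProjInSigma A M X) (hN : InSigma A M N) {g : N →ₗ[A] X}
    (hg : Function.Surjective g) : ∃ h : X →ₗ[A] N, g ∘ₗ h = LinearMap.id := by
  obtain ⟨h, hh⟩ := hX.2 N X hN hX.1 g hg LinearMap.id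
  exact ⟨h, LinearMap.ext hh⟩

lemma projInSigma_of_exists_section {X : Type v} [AddCommGroup X] [Module A X]
    (hX : InSigma A M X) (hsplit : ∀ (N : Type v) [AddCommGroup N] [Module A N], InSigma A M N →
      ∀ g : N →ₗ[A] X, Function.Surjective g → ∃ h : X →ₗ[A] N, g ∘ₗ h = LinearMap.id) :
    ProjInSigma A M X := by
  refine ⟨hX, fun N Y _ _ _ _ hN _ g hg f => ?_⟩
  let P : Submodule A (N × X) := LinearMap.eqLocus (g ∘ₗ .fst A N X) (f ∘ₗ .snd A N X)
  have hsnd : Function.Surjective (LinearMap.snd A N X ∘ₗ P.subtype) := fun x => by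
    obtain ⟨n, hn⟩ := hg (f x)
    exact ⟨⟨(n, x), hn⟩, rfl⟩
  obtain ⟨h, hh⟩ := hsplit P ((hN.prod hX).of_injective P.subtype_injective) _ hsnd
  refine ⟨LinearMap.fst A N X ∘ₗ P.subtype ∘ₗ h, fun x => ?_⟩
  exact (h x).2.trans (congrArg f (LinearMap.congr_fun hh x))

lemma IsLocalModule.finite (hU : IsLocalModule A U) : Module.Finite A U := by
  obtain ⟨P, hP, hmax⟩ := hU
  obtain ⟨x, -, hx⟩ := SetLike.exists_of_lt hP.lt_top
  have hspan : Submodule.span A {x} = ⊤ := by_contra fun h =>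
    hx (hmax _ h (Submodule.mem_span_singleton_self x))
  exact ⟨{x}, by simpa using hspan⟩

end Projective

/-- Every nonsimple cocyclic module in `σ(M)` is projective in `σ(M)`. This is the condition
through which the three conditions of the theorem are compared. -/
def NonsimpleCocyclicsProjective (A : Type u) [Ring A] (M : Type v) [AddCommGroup M]
    [Module A M] : Prop :=
  ∀ (X : Type v) [AddCommGroup X] [Module A X], InSigma A M X →
    ∀ s : X, IsMonolithGenerator A s → ¬ IsSimpleModule A X → ProjInSigma A M X

section Telescope

variable {A : Type u} [Ring A] {X : Type*} [AddCommGroup X] [Module A X]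

/- Up to the passage from `range (1 - shift)` to `C`, the quotient is the direct limit of
`X → X → X → ⋯` along `α`. -/
lemma exists_cocyclic_telescope {α : Module.End A X} (hα : Function.Injective α) {s : X}
    (hs : s ≠ 0) :
    ∃ C : Submodule A (ℕ →₀ X), IsMonolithGenerator A (C.mkQ (.single 0 s)) ∧
      ∀ n x, C.mkQ (.single (n + 1) (α x)) = C.mkQ (.single n x) := by
  let shift : Module.End A (ℕ →₀ X) :=
    Finsupp.lmapDomain X A Nat.succ ∘ₗ Finsupp.mapRange.linearMap α
  have hshift_zero (z) : shift z 0 = 0 := Finsupp.mapDomain_of_notMem_range _ _ (by simp)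
  have hshift_succ (z n) : shift z (n + 1) = α (z n) :=
    (Finsupp.mapDomain_apply Nat.succ_injective _ n).trans (by simp)
  have hs_notMem : Finsupp.single 0 s ∉ LinearMap.range (1 - shift) := by
    rintro ⟨z, hz⟩
    have hz_ne : ∀ n, z n ≠ 0 := fun n => by
      have hzn := DFunLike.congr_fun hz n
      induction n with
      | zero =>
        have hz_zero : z 0 = s := by simpa [hshift_zero] using hzn
        exact hz_zero ▸ hs
      | succ n ih =>
        have hzα : z (n + 1) = α (z n) := by simpa [hshift_succ, sub_eq_zero] using hzn
        exact hzα ▸ (map_ne_zero_iff α hα).2 (ih (DFunLike.congr_fun hz n))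
    obtain ⟨n, hn⟩ := Infinite.exists_notMem_finset z.support
    exact hz_ne n (Finsupp.notMem_support_iff.1 hn)
  obtain ⟨C, hC, hsC⟩ := exists_le_isMonolithGenerator_mkQ hs_notMem
  refine ⟨C, hsC, fun n x => ((Submodule.Quotient.eq C).2 (hC ⟨.single n x, ?_⟩)).symm⟩
  simp [shift]

lemma mkQ_single_lsum_pow {α : Module.End A X} {C : Submodule A (ℕ →₀ X)}
    (hC : ∀ n x, C.mkQ (.single (n + 1) (α x)) = C.mkQ (.single n x)) {N : ℕ} {z : ℕ →₀ X}
    (hz : ∀ n ∈ z.support, n ≤ N) :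
    C.mkQ (.single N (Finsupp.lsum ℕ (fun n => α ^ (N - n)) z)) = C.mkQ z := by
  have hpow : ∀ k n x, C.mkQ (.single (n + k) ((α ^ k) x)) = C.mkQ (.single n x) := by
    intro k
    induction k with
    | zero => simp
    | succ k ih => exact fun n x => by rw [pow_succ', ← add_assoc, Module.End.mul_apply, hC, ih]
  rw [Finsupp.lsum_apply, Finsupp.sum, Finsupp.single_finsetSum, map_sum]
  conv_rhs => rw [← z.sum_single, Finsupp.sum, map_sum]
  refine Finset.sum_congr rfl fun n hn => ?_
  conv_lhs => rw [← Nat.add_sub_of_le (hz n hn)]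
  simpa using hpow (N - n) n (z n)

end Telescope

namespace NonsimpleCocyclicsProjective

variable {A : Type u} [Ring A] {M : Type v} [AddCommGroup M] [Module A M]
variable {X : Type v} [AddCommGroup X] [Module A X] {s : X}

lemma isSimpleModule_of_apply_eq_zero (hM : NonsimpleCocyclicsProjective A M)
    (hX : InSigma A M X) (hs : IsMonolithGenerator A s) {Y : Type v} [AddCommGroup Y] [Module A Y]
    {g : X →ₗ[A] Y} (hg : Function.Surjective g) (hgs : g s = 0) {t : Y}
    (ht : IsMonolithGenerator A t) : IsSimpleModule A Y := by
  by_contra hY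
  obtain ⟨h, hgh⟩ := (hM Y (hX.of_surjective hg) t ht hY).exists_section hX hg
  have hgh (y) : g (h y) = y := LinearMap.congr_fun hgh y
  have hrange : LinearMap.range h ≠ ⊥ := fun hbot =>
    ht.1 (by rw [← hgh t, LinearMap.range_eq_bot.1 hbot, LinearMap.zero_apply, map_zero])
  obtain ⟨y, rfl⟩ := hs.2 _ hrange
  rw [hgh] at hgs
  exact hs.1 (by rw [hgs, map_zero])

lemma mul_self_eq_zero (hM : NonsimpleCocyclicsProjective A M) (hX : InSigma A M X)
    (hs : IsMonolithGenerator A s) {n : Module.End A X} (hn : n s = 0) : n * n = 0 := by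
  rcases eq_or_ne n 0 with rfl | hn0
  · simp
  have : Nontrivial (LinearMap.range n) :=
    Submodule.nontrivial_iff_ne_bot.2 fun h => hn0 (LinearMap.range_eq_bot.1 h)
  obtain ⟨t, -, ht⟩ := hs.exists_of_injective (LinearMap.range n).subtype_injective
  have := hM.isSimpleModule_of_apply_eq_zero hX hs n.surjective_rangeRestrict (Subtype.ext hn) ht
  have hrange : LinearMap.range n ≤ Submodule.span A {s} := by
    simpa using hs.range_le_span (LinearMap.range n).subtype
  exact LinearMap.range_le_ker_iff.1
    (hrange.trans ((Submodule.span_singleton_le_iff_mem _ _).2 hn))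

lemma bijective_of_apply_eq_self (hM : NonsimpleCocyclicsProjective A M) (hX : InSigma A M X)
    (hs : IsMonolithGenerator A s) {f : Module.End A X} (hf : f s = s) :
    Function.Bijective f := by
  have hnil : IsNilpotent (f - 1) :=
    ⟨2, by rw [sq, hM.mul_self_eq_zero hX hs (by simp [hf])]⟩
  simpa using (Module.End.isUnit_iff _).1 hnil.isUnit_add_one

lemma surjective_of_injective (hM : NonsimpleCocyclicsProjective A M) (hX : InSigma A M X)
    (hs : IsMonolithGenerator A s) (hXs : ¬ IsSimpleModule A X) {α : Module.End A X}
    (hα : Function.Injective α) : Function.Surjective α := by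
  obtain ⟨C, hC, hCα⟩ := exists_cocyclic_telescope hα hs.1
  have := hs.nontrivial
  let e (n : ℕ) : X →ₗ[A] (ℕ →₀ X) ⧸ C := C.mkQ ∘ₗ Finsupp.lsingle n
  have he_succ (n) : e (n + 1) ∘ₗ α = e n := LinearMap.ext (hCα n)
  have he_inj (n) : Function.Injective (e n) := by
    induction n with
    | zero => exact hs.injective hC.1
    | succ n ih => exact hs.injective_of_comp (f := α) (he_succ n ▸ ih)
  have hF : InSigma A M (ℕ →₀ X) := hX.finsupp ℕ
  have hE : InSigma A M ((ℕ →₀ X) ⧸ C) := hF.of_surjective C.mkQ_surjective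
  have hEs : ¬ IsSimpleModule A ((ℕ →₀ X) ⧸ C) := fun _ =>
    hXs (isSimpleModule_of_injective (e 0) (he_inj 0))
  obtain ⟨h, hh⟩ := (hM _ hE _ hC hEs).exists_section hF C.mkQ_surjective
  let N := (h (e 0 s)).support.sup id
  let f : (ℕ →₀ X) ⧸ C →ₗ[A] X := Finsupp.lsum ℕ (fun n => α ^ (N - n)) ∘ₗ h
  have hf : e N (f (e 0 s)) = e 0 s :=
    (mkQ_single_lsum_pow hCα fun _ => Finset.le_sup (f := id)).trans (LinearMap.congr_fun hh _)
  have heN : Function.Surjective (e N) :=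
    .of_comp (g := f) (hM.bijective_of_apply_eq_self hE hC (f := e N ∘ₗ f) hf).2
  intro y
  obtain ⟨x, hx⟩ := heN (e (N + 1) y)
  exact ⟨x, he_inj (N + 1) ((hCα N x).trans hx)⟩

lemma eq_top_of_sup_eq_top (hM : NonsimpleCocyclicsProjective A M) (hX : InSigma A M X)
    (hs : IsMonolithGenerator A s) (hXs : ¬ IsSimpleModule A X) {K L : Submodule A X}
    (hKL : K ⊔ L = ⊤) : K = ⊤ ∨ L = ⊤ := by
  have hsurj : Function.Surjective (K.subtype.coprod L.subtype) := by
    rw [← LinearMap.range_eq_top, LinearMap.range_coprod, K.range_subtype, L.range_subtype, hKL]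
  have hKLσ : InSigma A M (K × L) :=
    (hX.of_injective K.subtype_injective).prod (hX.of_injective L.subtype_injective)
  obtain ⟨h, hh⟩ := (hM X hX s hs hXs).exists_section hKLσ hsurj
  let α : Module.End A X := K.subtype ∘ₗ .fst A K L ∘ₗ h
  let β : Module.End A X := L.subtype ∘ₗ .snd A K L ∘ₗ h
  have hαβ : α s + β s = s := LinearMap.congr_fun hh s
  by_cases hα : α s = 0
  · right
    have hβ : β s ≠ 0 := fun hβ => hs.1 (by rw [← hαβ, hα, hβ, add_zero])
    refine Submodule.eq_top_iff'.2 fun x => ?_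
    obtain ⟨y, rfl⟩ := hM.surjective_of_injective hX hs hXs (hs.injective hβ) x
    exact (h y).2.2
  · left
    refine Submodule.eq_top_iff'.2 fun x => ?_
    obtain ⟨y, rfl⟩ := hM.surjective_of_injective hX hs hXs (hs.injective hα) x
    exact (h y).1.2

lemma exists_isCoatom_notMem (hM : NonsimpleCocyclicsProjective A M) (hX : InSigma A M X)
    (hs : IsMonolithGenerator A s) {x : X} (hx : x ∉ Submodule.span A {s}) :
    ∃ L : Submodule A X, IsCoatom L ∧ x ∉ L := by
  obtain ⟨L, hsL, hL⟩ := exists_le_isMonolithGenerator_mkQ hx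
  have hLs : L.mkQ s = 0 := by simpa using hsL (Submodule.mem_span_singleton_self s)
  exact ⟨L, isSimpleModule_iff_isCoatom.1
    (hM.isSimpleModule_of_apply_eq_zero hX hs L.mkQ_surjective hLs hL), by simpa using hL.1⟩

lemma eq_span_of_ne (hM : NonsimpleCocyclicsProjective A M) (hX : InSigma A M X)
    (hs : IsMonolithGenerator A s) (hXs : ¬ IsSimpleModule A X) {K : Submodule A X}
    (hbot : K ≠ ⊥) (htop : K ≠ ⊤) : K = Submodule.span A {s} := by
  refine le_antisymm (fun x hxK => by_contra fun hx => ?_) (hs.span_le hbot)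
  obtain ⟨L, hL, hxL⟩ := hM.exists_isCoatom_notMem hX hs hx
  have hLK : K ⊔ L = ⊤ := by
    rw [sup_comm]
    exact (hL.lt_iff).1 (left_lt_sup.2 fun hKL => hxL (hKL hxK))
  exact (hM.eq_top_of_sup_eq_top hX hs hXs hLK).elim htop hL.1

lemma isCoatom_span (hM : NonsimpleCocyclicsProjective A M) (hX : InSigma A M X)
    (hs : IsMonolithGenerator A s) (hXs : ¬ IsSimpleModule A X) :
    IsCoatom (Submodule.span A {s}) := by
  refine ⟨mt hs.isSimpleModule_iff.2 hXs, fun K hK => by_contra fun htop => ?_⟩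
  exact hK.ne (hM.eq_span_of_ne hX hs hXs hK.ne_bot htop).symm

lemma hasLengthTwo (hM : NonsimpleCocyclicsProjective A M) (hX : InSigma A M X)
    (hs : IsMonolithGenerator A s) (hXs : ¬ IsSimpleModule A X) : HasLengthTwo A X :=
  ⟨_, isSimpleModule_iff_isAtom.1 hs.isSimpleModule_span, hM.isCoatom_span hX hs hXs⟩

lemma isLocalModule (hM : NonsimpleCocyclicsProjective A M) (hX : InSigma A M X)
    (hs : IsMonolithGenerator A s) (hXs : ¬ IsSimpleModule A X) : IsLocalModule A X := by
  refine ⟨_, (hM.isCoatom_span hX hs hXs).1, fun K hK => ?_⟩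
  rcases eq_or_ne K ⊥ with rfl | hbot
  · exact bot_le
  · exact (hM.eq_span_of_ne hX hs hXs hbot hK).le

lemma relInjective (hM : NonsimpleCocyclicsProjective A M) (hX : InSigma A M X)
    (hs : IsMonolithGenerator A s) (hXs : ¬ IsSimpleModule A X) : RelInjective A M X := by
  intro K f
  have := hs.nontrivial
  obtain ⟨Y, _, _, k, j, hkj, hY, hjs⟩ := exists_cocyclic_pushout f hs
  have hj : Function.Injective j := hs.injective hjs.1
  have hYσ : InSigma A M Y := ((InSigma.self A M).prod hX).of_surjective hY
  have hYs : ¬ IsSimpleModule A Y := fun _ => hXs (isSimpleModule_of_injective j hj)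
  refine exists_extension_of_bijective hkj ⟨hj, LinearMap.range_eq_top.1 (by_contra fun htop => ?_)⟩
  have hbot : LinearMap.range j ≠ ⊥ := (Submodule.ne_bot_iff _).2 ⟨j s, ⟨s, rfl⟩, hjs.1⟩
  have hspan := hM.eq_span_of_ne hYσ hjs hYs hbot htop
  have : IsSimpleModule A (LinearMap.range j) := hspan ▸ hjs.isSimpleModule_span
  exact hXs (isSimpleModule_of_injective j.rangeRestrict
    ((LinearMap.injective_rangeRestrict_iff _).2 hj))

end NonsimpleCocyclicsProjective

section Criteria

variable {A : Type u} [Ring A] {M : Type v} [AddCommGroup M] [Module A M]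

lemma IsMonolithGenerator.isSimpleModule_of_extends {N X : Type*} [AddCommGroup N] [Module A N]
    [AddCommGroup X] [Module A X] {s : X} (hs : IsMonolithGenerator A s) {g : N →ₗ[A] X}
    (hg : Function.Surjective g) {k : N →ₗ[A] Submodule.span A {s}}
    (hk : ∀ x, g x ∈ Submodule.span A {s} → (k x : X) = g x) : IsSimpleModule A X := by
  have hmem {x} (hx : g x = s) : g x ∈ Submodule.span A {s} := by
    rw [hx]
    exact Submodule.mem_span_singleton_self s
  have hker : LinearMap.ker k ≤ LinearMap.ker g := hs.le_ker <| by
    rintro ⟨x, hkx, hx⟩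
    exact hs.1 (by rw [← hx, ← hk x (hmem hx), LinearMap.mem_ker.1 hkx, ZeroMemClass.coe_zero])
  have := hs.isSimpleModule_span
  have := hs.nontrivial
  have hk0 : k ≠ 0 := by
    rintro rfl
    obtain ⟨x, hx⟩ := hg s
    exact hs.1 (hx ▸ hker rfl)
  obtain ⟨g', rfl⟩ := exists_comp_eq_of_ker_le (LinearMap.surjective_of_ne_zero hk0) hker
  exact isSimpleModule_of_surjective g' (.of_comp hg)

lemma IsMonolithGenerator.ker_eq_ker_of_factors {N X : Type*} [AddCommGroup N] [Module A N]
    [AddCommGroup X] [Module A X] {s : X} (hs : IsMonolithGenerator A s) {g : N →ₗ[A] X}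
    {p : Module.End A N} (hp : IsIdempotentElem p) (hp0 : p ≠ 0)
    {h : Submodule.span A {s} →ₗ[A] LinearMap.range p}
    (hh : ∀ x (hx : g x ∈ Submodule.span A {s}), (h ⟨g x, hx⟩ : N) = p x) :
    LinearMap.ker g = LinearMap.ker p := by
  have hmem {x} (hx : g x = s) : g x ∈ Submodule.span A {s} := by
    rw [hx]
    exact Submodule.mem_span_singleton_self s
  have hker : LinearMap.ker g ≤ LinearMap.ker p := fun x hx => by
    have hgx : g x ∈ Submodule.span A {s} := by simp [LinearMap.mem_ker.1 hx]
    have hgx0 : (⟨g x, hgx⟩ : Submodule.span A {s}) = 0 := Subtype.ext hx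
    rw [LinearMap.mem_ker, ← hh x hgx, hgx0, map_zero, ZeroMemClass.coe_zero]
  have hh0 : h ≠ 0 := by
    rintro rfl
    refine hp0 (hp.symm.trans (LinearMap.range_le_ker_iff.1 ((hs.le_ker ?_).trans hker)))
    rintro ⟨_, ⟨x, rfl⟩, hx⟩
    have hpx : p (p x) = 0 := by simpa using (hh (p x) (hmem hx)).symm
    rw [← Module.End.mul_apply, hp] at hpx
    exact hs.1 (by rw [← hx, hpx, map_zero])
  have := hs.isSimpleModule_span
  refine hker.antisymm (hs.le_ker ?_)
  rintro ⟨x, hpx, hx⟩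
  have hhx : h ⟨g x, hmem hx⟩ = 0 := Subtype.ext ((hh x (hmem hx)).trans hpx)
  have hgx := (map_eq_zero_iff h (LinearMap.injective_of_ne_zero hh0)).1 hhx
  exact hs.1 (hx.symm.trans (congrArg Subtype.val hgx))

lemma IsAlmostVModule.nonsimpleCocyclicsProjective (hM : IsAlmostVModule A M) :
    NonsimpleCocyclicsProjective A M := by
  intro X _ _ hX s hs hXs
  refine projInSigma_of_exists_section hX fun N _ _ hN g hg => ?_
  rcases hM _ hs.isSimpleModule_span N hN ((Submodule.span A {s}).comap g)
    (g.restrict fun _ hx => hx) with ⟨k, hk⟩ | ⟨p, hp, hp0, h, hh⟩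
  · exact absurd
      (hs.isSimpleModule_of_extends hg fun x hx => congrArg Subtype.val (hk ⟨x, hx⟩)) hXs
  · exact exists_section_of_isIdempotentElem hp hg
      (hs.ker_eq_ker_of_factors hp hp0 fun x hx => hh ⟨x, hx⟩)

lemma NonsimpleCocyclicsProjective.isAlmostVModule (hM : NonsimpleCocyclicsProjective A M) :
    IsAlmostVModule A M := by
  intro S _ _ _ N _ _ hN K f
  refine (exists_extension_or_nonsimple_cocyclic_quotient f).imp_right ?_
  rintro ⟨Y, _, _, k, j, t, hkj, hk, ht, hY⟩
  obtain ⟨h, hkh⟩ := (hM Y (hN.of_surjective hk) t ht hY).exists_section hN hk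
  have hkh (y) : k (h y) = y := LinearMap.congr_fun hkh y
  refine ⟨h ∘ₗ k, LinearMap.ext fun x => congrArg h (hkh (k x)), fun h0 => ht.1 ?_,
    (h ∘ₗ j).codRestrict _ fun z => ⟨h (j z), congrArg h (hkh (j z))⟩,
    fun x => congrArg h (LinearMap.congr_fun hkj x).symm⟩
  have hhk : h (k (h t)) = 0 := LinearMap.congr_fun h0 (h t)
  rw [← hkh t, ← hkh (k (h t)), hhk, map_zero]

lemma IsMonolithGenerator.eq_top_of_isDirectSummand {X : Type*} [AddCommGroup X] [Module A X]
    {s : X} (hs : IsMonolithGenerator A s) {D : Submodule A X} (hD : D ≠ ⊥)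
    (hsum : IsDirectSummand A D) : D = ⊤ := by
  obtain ⟨D', hDD'⟩ := hsum
  have hD' : D' = ⊥ := hs.eq_bot_of_notMem fun hsD' =>
    hs.1 (Submodule.disjoint_def.1 hDD'.disjoint s (hs.2 D hD) hsD')
  exact eq_top_of_isCompl_bot (hD' ▸ hDD')

lemma nonsimpleCocyclicsProjective_of_isVModule_or_exists_summand
    (hM : ∀ (N : Type v) [AddCommGroup N] [Module A N], InSigma A M N →
      IsVModule A N ∨ ∃ D : Submodule A N, D ≠ ⊥ ∧ IsDirectSummand A D ∧ ProjInSigma A M D) :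
    NonsimpleCocyclicsProjective A M := by
  intro X _ _ hX s hs hXs
  rcases hM X hX with hV | ⟨D, hD, hsum, hproj⟩
  · exact absurd (hV.isSimpleModule (g := LinearMap.id) Function.surjective_id hs) hXs
  · exact hproj.of_equiv (.ofTop D (hs.eq_top_of_isDirectSummand hD hsum))

lemma NonsimpleCocyclicsProjective.isVModule_or_exists_summand
    (hM : NonsimpleCocyclicsProjective A M) {N : Type v} [AddCommGroup N] [Module A N]
    (hN : InSigma A M N) :
    IsVModule A N ∨ ∃ D : Submodule A N, D ≠ ⊥ ∧ IsDirectSummand A D ∧ ProjInSigma A M D := by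
  refine or_iff_not_imp_left.2 fun hV => ?_
  obtain ⟨C, x, hx, hC⟩ : ∃ (C : Submodule A N) (x : N),
      IsMonolithGenerator A (C.mkQ x) ∧ ¬ IsSimpleModule A (N ⧸ C) := by
    contrapose! hV
    exact isVModule_of_isSimpleModule_quotient hV
  have hproj := hM _ (hN.of_surjective C.mkQ_surjective) _ hx hC
  obtain ⟨h, hh⟩ := hproj.exists_section hN C.mkQ_surjective
  have hinj : Function.Injective h :=
    .of_comp (f := C.mkQ) (LinearMap.coe_comp C.mkQ h ▸ hh ▸ Function.injective_id)
  have hcompl : IsCompl (LinearMap.range h) C := by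
    simpa using isCompl_range_ker_of_comp_eq_id hh
  refine ⟨LinearMap.range h, fun hbot => hx.1 (hinj ?_), ⟨C, hcompl⟩,
    hproj.of_equiv (.ofInjective h hinj)⟩
  simp [LinearMap.range_eq_bot.1 hbot]

end Criteria

section Independent

lemma sSupIndep_insert_of_disjoint {α : Type*} [CompleteLattice α] [IsModularLattice α]
    {t : Set α} (ht : sSupIndep t) {a : α} (ha : Disjoint a (sSup t)) :
    sSupIndep (insert a t) := by
  rintro x (rfl | hx)
  · refine ha.mono_right (sSup_le ?_)
    rintro y ⟨hy, hyx⟩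
    exact le_sSup (hy.resolve_left hyx)
  · have hxa : Disjoint (x ⊔ sSup (t \ {x})) a :=
      (ha.mono_right (sup_le (le_sSup hx) (sSup_le_sSup Set.sdiff_subset))).symm
    refine ((ht hx).disjoint_sup_right_of_disjoint_sup_left hxa).mono_right (sSup_le ?_)
    rintro y ⟨rfl | hy, hyx⟩
    · exact le_sup_right
    · exact le_sup_of_le_left (le_sSup ⟨hy, hyx⟩)

lemma exists_maximal_sSupIndep_subset {α : Type*} [CompleteLattice α] [IsModularLattice α]
    [IsCompactlyGenerated α] (G : Set α) :
    ∃ t ⊆ G, sSupIndep t ∧ ∀ a ∈ G, Disjoint a (sSup t) → a = ⊥ := by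
  obtain ⟨t, ⟨htG, hind⟩, hmax⟩ := zorn_subset {t : Set α | t ⊆ G ∧ sSupIndep t}
    fun c hc hchain => ⟨⋃₀ c, ⟨Set.sUnion_subset fun s hs => (hc hs).1,
      iSupIndep_sUnion_of_directed hchain.directedOn fun s hs => (hc hs).2⟩,
      fun _ => Set.subset_sUnion_of_mem⟩
  refine ⟨t, htG, hind, fun a ha hdisj => hdisj.eq_bot_of_le (le_sSup ?_)⟩
  exact hmax ⟨Set.insert_subset ha htG, sSupIndep_insert_of_disjoint hind hdisj⟩
    (Set.subset_insert a t) (Set.mem_insert a t)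

lemma range_le_of_iSupIndep {A : Type u} [Ring A] {N T : Type*} [AddCommGroup N] [Module A N]
    [AddCommGroup T] [Module A T] {ι : Type*} {p : ι → Submodule A N} (hp : iSupIndep p)
    {k : T →ₗ[A] N} (hk : LinearMap.range k ≤ ⨆ i, p i) {C : Submodule A N}
    (hC : ∀ i (f : T →ₗ[A] p i) x, (f x : N) ∈ C) : LinearMap.range k ≤ C := by
  classical
  rw [Submodule.iSup_eq_range_dfinsupp_lsum] at hk
  let e := LinearEquiv.ofInjective _ hp.dfinsupp_lsum_injective
  let f : T →ₗ[A] Π₀ i, p i := e.symm ∘ₗ k.codRestrict _ fun x => hk ⟨x, rfl⟩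
  rintro _ ⟨x, rfl⟩
  have hx : DFinsupp.lsum ℕ (fun i => (p i).subtype) (f x) = k x :=
    congrArg Subtype.val (e.apply_symm_apply _)
  rw [← hx, DFinsupp.lsum_apply_apply, DFinsupp.sumAddHom_apply]
  exact Submodule.sum_mem _ fun i _ => hC i (DFinsupp.lapply i ∘ₗ f) x

end Independent

section MaximalFamily

variable {A : Type u} [Ring A] {M : Type v} [AddCommGroup M] [Module A M]
variable {ι : Type*} {B : ι → Submodule A M}

lemma iSup_map_modRad_le : ⨆ i, (modRad A (B i)).map (B i).subtype ≤ modRad A M :=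
  iSup_le fun i => Module.map_jacobson_le (B i).subtype

lemma IsMonolithGenerator.disjoint_range_iSup {Y : Type*} [AddCommGroup Y] [Module A Y] {t : Y}
    (ht : IsMonolithGenerator A t) {g : M →ₗ[A] Y} {h : Y →ₗ[A] M} (hgh : g ∘ₗ h = LinearMap.id)
    (hB : iSupIndep B)
    (hcyc : ∀ i, ∃ s : B i, IsMonolithGenerator A s ∧ ¬ IsSimpleModule A (B i))
    (hg : ⨆ i, (modRad A (B i)).map (B i).subtype ≤ LinearMap.ker g) :
    Disjoint (LinearMap.range h) (⨆ i, B i) := by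
  have hgh (y) : g (h y) = y := LinearMap.congr_fun hgh y
  have htB : h t ∉ ⨆ i, B i := fun htB => by
    have := ht.isSimpleModule_span
    let k : Submodule.span A {t} →ₗ[A] M := h ∘ₗ (Submodule.span A {t}).subtype
    have hk : LinearMap.range k ≤ ⨆ i, B i := by
      rwa [LinearMap.range_comp, Submodule.range_subtype, Submodule.map_span,
        Set.image_singleton, Submodule.span_singleton_le_iff_mem]
    have hkg : LinearMap.range k ≤ LinearMap.ker g := range_le_of_iSupIndep hB hk fun i f x => by
      obtain ⟨s, hs, hBi⟩ := hcyc i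
      exact hg (le_iSup (fun i => (modRad A (B i)).map (B i).subtype) i
        ⟨f x, hs.range_le_modRad hBi f ⟨x, rfl⟩, rfl⟩)
    exact ht.1 ((hgh t).symm.trans (hkg ⟨⟨t, Submodule.mem_span_singleton_self t⟩, rfl⟩))
  have hcomap : (⨆ i, B i).comap h = ⊥ := ht.eq_bot_of_notMem htB
  rw [Submodule.disjoint_def]
  rintro _ ⟨y, rfl⟩ hy
  rw [(Submodule.eq_bot_iff _).1 hcomap y hy, map_zero]

end MaximalFamily

namespace NonsimpleCocyclicsProjective

variable {A : Type u} [Ring A] {M : Type v} [AddCommGroup M] [Module A M]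

lemma isSimpleModule_of_maximal {ι : Type*} {B : ι → Submodule A M}
    (hM : NonsimpleCocyclicsProjective A M) (hB : iSupIndep B)
    (hcyc : ∀ i, ∃ s : B i, IsMonolithGenerator A s ∧ ¬ IsSimpleModule A (B i))
    (hmax : ∀ D : Submodule A M, (∃ s : D, IsMonolithGenerator A s ∧ ¬ IsSimpleModule A D) →
      Disjoint D (⨆ i, B i) → D = ⊥)
    {Y : Type v} [AddCommGroup Y] [Module A Y] {g : M →ₗ[A] Y} (hg : Function.Surjective g)
    (hker : ⨆ i, (modRad A (B i)).map (B i).subtype ≤ LinearMap.ker g) {t : Y}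
    (ht : IsMonolithGenerator A t) : IsSimpleModule A Y := by
  by_contra hY
  have hMσ := InSigma.self A M
  obtain ⟨h, hgh⟩ := (hM Y (hMσ.of_surjective hg) t ht hY).exists_section hMσ hg
  have hinj : Function.Injective h := LinearMap.injective_of_comp_eq_id h g hgh
  let e : Y ≃ₗ[A] LinearMap.range h := .ofInjective h hinj
  have hes : IsMonolithGenerator A (e t) :=
    ht.comap (g := e.symm.toLinearMap) e.symm.injective (e.symm_apply_apply t)
  have hbot := hmax _ ⟨e t, hes, fun _ => hY (.congr e)⟩ (ht.disjoint_range_iSup hgh hB hcyc hker)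
  exact hes.1 (Subtype.ext ((Submodule.mem_bot A).1 (hbot ▸ (e t).2)))

lemma exists_iSupIndep_family (hM : NonsimpleCocyclicsProjective A M) :
    ∃ (ι : Type v) (B : ι → Submodule A M), iSupIndep B ∧
      (∀ i, IsLocalModule A (B i) ∧ HasLengthTwo A (B i) ∧
        RelInjective A M (B i) ∧ RelProjective A M (B i)) ∧
      modRad A M = ⨆ i, (modRad A (B i)).map (B i).subtype ∧
      IsVModule A (M ⧸ modRad A M) := by
  obtain ⟨t, htG, hind, hmax⟩ := exists_maximal_sSupIndep_subset
    {D : Submodule A M | ∃ s : D, IsMonolithGenerator A s ∧ ¬ IsSimpleModule A D}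
  rw [sSupIndep_iff] at hind
  rw [sSup_eq_iSup'] at hmax
  have hsimple {Y : Type v} [AddCommGroup Y] [Module A Y] {g : M →ₗ[A] Y}
      (hg : Function.Surjective g) :=
    hM.isSimpleModule_of_maximal hind (fun D => htG D.2) hmax hg
  have hrad : modRad A M = ⨆ D : t, (modRad A (D : Submodule A M)).map D.1.subtype := by
    refine le_antisymm (fun x hx => by_contra fun hxB => ?_) iSup_map_modRad_le
    obtain ⟨C, hC, hxC⟩ := exists_le_isMonolithGenerator_mkQ hxB
    have hCco : IsCoatom C := isSimpleModule_iff_isCoatom.1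
      (hsimple C.mkQ_surjective (by rwa [C.ker_mkQ]) hxC)
    exact hxC.1 ((Submodule.Quotient.mk_eq_zero C).2 ((Submodule.mem_sInf.1 hx) C hCco))
  refine ⟨t, (↑), hind, fun D => ?_, hrad, ?_⟩
  · obtain ⟨s, hs, hD⟩ := htG D.2
    have hDσ : InSigma A M D.1 := (InSigma.self A M).of_injective D.1.subtype_injective
    exact ⟨hM.isLocalModule hDσ hs hD, hM.hasLengthTwo hDσ hs hD, hM.relInjective hDσ hs hD,
      (hM _ hDσ s hs hD).relProjective⟩
  · refine isVModule_of_isSimpleModule_quotient fun C x hx => ?_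
    refine hsimple (g := C.mkQ ∘ₗ (modRad A M).mkQ)
      (C.mkQ_surjective.comp (modRad A M).mkQ_surjective) ?_ hx
    rw [← hrad, LinearMap.ker_comp, Submodule.ker_mkQ]
    exact Submodule.le_comap_mkQ _ _

end NonsimpleCocyclicsProjective

section Converse

variable {A : Type u} [Ring A]

lemma HasLengthTwo.exists_forall_submodule {U : Type*} [AddCommGroup U] [Module A U]
    (hlen : HasLengthTwo A U) (hloc : IsLocalModule A U) :
    ∃ S : Submodule A U, IsAtom S ∧ IsCoatom S ∧ ∀ K, K = ⊥ ∨ K = S ∨ K = ⊤ := by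
  obtain ⟨S, hatom, hcoatom⟩ := hlen
  obtain ⟨P, hP, hmax⟩ := hloc
  obtain rfl : P = S := (hcoatom.le_iff_eq hP).1 (hmax S hcoatom.1)
  refine ⟨P, hatom, hcoatom, fun K => ?_⟩
  rw [← or_assoc, ← hatom.le_iff, or_comm]
  exact or_iff_not_imp_left.2 (hmax K)

lemma IsLocalModule.injective_of_not_modRad_le_ker {U Y : Type*} [AddCommGroup U] [Module A U]
    [AddCommGroup Y] [Module A Y] (hloc : IsLocalModule A U) (hlen : HasLengthTwo A U)
    {f : U →ₗ[A] Y} (hf : ¬ modRad A U ≤ LinearMap.ker f) : Function.Injective f := by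
  obtain ⟨S, -, hcoatom, hS⟩ := hlen.exists_forall_submodule hloc
  have hradS : modRad A U ≤ S := sInf_le hcoatom
  rcases hS (LinearMap.ker f) with hker | hker | hker
  · exact LinearMap.ker_eq_bot.1 hker
  · exact absurd (hradS.trans hker.ge) hf
  · exact absurd (hker ▸ le_top) hf

lemma IsLocalModule.surjective_of_injective {U X : Type*} [AddCommGroup U] [Module A U]
    [AddCommGroup X] [Module A X] [Nontrivial X] (hloc : IsLocalModule A U)
    (hlen : HasLengthTwo A U) (hX : ¬ IsSimpleModule A X) {f : X →ₗ[A] U}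
    (hf : Function.Injective f) : Function.Surjective f := by
  obtain ⟨S, hatom, -, hS⟩ := hlen.exists_forall_submodule hloc
  rcases hS (LinearMap.range f) with hrange | hrange | hrange
  · have hsub : Subsingleton X := ⟨fun x y => hf (by simp [LinearMap.range_eq_bot.1 hrange])⟩
    exact absurd hsub (not_subsingleton X)
  · have : IsSimpleModule A (LinearMap.range f) := isSimpleModule_iff_isAtom.2 (hrange ▸ hatom)
    exact absurd (.congr (.ofInjective f hf)) hX
  · exact LinearMap.range_eq_top.1 hrange

lemma RelInjective.range_le_range {Q U Y : Type*} [AddCommGroup Q] [Module A Q] [AddCommGroup U]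
    [Module A U] [Nontrivial U] [AddCommGroup Y] [Module A Y] (hU : RelInjective A Q U) {t : Y}
    (ht : IsMonolithGenerator A t) {g : U →ₗ[A] Y} (hg : Function.Injective g) (φ : Q →ₗ[A] Y) :
    LinearMap.range φ ≤ LinearMap.range g := by
  let e := LinearEquiv.ofInjective g hg
  obtain ⟨ψ, hψ⟩ := hU ((LinearMap.range g).comap φ)
    (e.symm ∘ₗ φ.restrict (q := LinearMap.range g) fun _ hx => hx)
  have hgψ {x} (hx : φ x ∈ LinearMap.range g) : g (ψ x) = φ x :=
    (congrArg g (hψ ⟨x, hx⟩)).trans (congrArg Subtype.val (e.apply_symm_apply ⟨φ x, hx⟩))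
  obtain ⟨u, rfl, -⟩ := ht.exists_of_injective hg
  have hzero : φ - g ∘ₗ ψ = 0 := LinearMap.range_eq_bot.1 <| ht.eq_bot_of_notMem <| by
    rintro ⟨x, hx⟩
    have hφx : φ x = g (u + ψ x) := by
      rw [map_add, ← hx]
      simp
    exact ht.1 (by simp [← hx, hgψ ⟨_, hφx.symm⟩])
  rw [sub_eq_zero.1 hzero]
  exact LinearMap.range_comp_le_range ψ g

variable {M : Type v} [AddCommGroup M] [Module A M]

lemma InSigma.exists_cocyclic_generated_hull {X : Type v} [AddCommGroup X] [Module A X]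
    (hX : InSigma A M X) {s : X} (hs : IsMonolithGenerator A s) :
    ∃ (Y : Type v) (_ : AddCommGroup Y) (_ : Module A Y) (j : X →ₗ[A] Y),
      Function.Injective j ∧ IsMonolithGenerator A (j s) ∧
        ⨆ φ : M →ₗ[A] Y, LinearMap.range φ = ⊤ := by
  obtain ⟨ι, K, P, ⟨e⟩⟩ := hX
  have hes : (e s : (ι →₀ M) ⧸ K) ∉ (⊥ : Submodule A ((ι →₀ M) ⧸ K)) := by simpa using hs.1
  obtain ⟨C, -, hC⟩ := exists_le_isMonolithGenerator_mkQ hes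
  refine ⟨_, inferInstance, inferInstance, C.mkQ ∘ₗ P.subtype ∘ₗ e, hs.injective hC.1, hC, ?_⟩
  have hsurj : LinearMap.range (C.mkQ ∘ₗ K.mkQ) = ⊤ :=
    LinearMap.range_eq_top.2 (C.mkQ_surjective.comp K.mkQ_surjective)
  rw [eq_top_iff, ← hsurj, LinearMap.range_eq_map, ← Finsupp.iSup_lsingle_range, Submodule.map_iSup]
  refine iSup_le fun i => ?_
  rw [← LinearMap.range_comp]
  exact le_iSup (fun φ : M →ₗ[A] _ => LinearMap.range φ) _

lemma IsMonolithGenerator.isSimpleModule_of_modRad_le_ker (hV : IsVModule A (M ⧸ modRad A M))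
    {Y : Type*} [AddCommGroup Y] [Module A Y] {t : Y} (ht : IsMonolithGenerator A t)
    (hgen : ⨆ φ : M →ₗ[A] Y, LinearMap.range φ = ⊤)
    (hker : ∀ φ : M →ₗ[A] Y, modRad A M ≤ LinearMap.ker φ) : IsSimpleModule A Y := by
  refine ht.isSimpleModule_iff.2 (top_le_iff.1 (hgen ▸ iSup_le fun φ => ?_))
  have := ht.isSimpleModule_span
  have := IsSimpleModule.nontrivial A (Submodule.span A {t})
  rw [← (modRad A M).range_liftQ φ (hker φ)]
  simpa using hV.relInjective.range_le_range ht (Submodule.span A {t}).subtype_injective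
    ((modRad A M).liftQ φ (hker φ))

variable {ι : Type*} {B : ι → Submodule A M}

lemma IsMonolithGenerator.exists_linearEquiv (hloc : ∀ i, IsLocalModule A (B i))
    (hlen : ∀ i, HasLengthTwo A (B i)) (hinj : ∀ i, RelInjective A M (B i))
    (hrad : modRad A M ≤ ⨆ i, (modRad A (B i)).map (B i).subtype)
    (hV : IsVModule A (M ⧸ modRad A M)) {Y : Type*} [AddCommGroup Y] [Module A Y] {t : Y}
    (ht : IsMonolithGenerator A t) (hY : ¬ IsSimpleModule A Y)
    (hgen : ⨆ φ : M →ₗ[A] Y, LinearMap.range φ = ⊤) : ∃ i, Nonempty (B i ≃ₗ[A] Y) := by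
  obtain ⟨i, φ, hφ⟩ : ∃ (i : ι) (φ : M →ₗ[A] Y),
      ¬ modRad A (B i) ≤ LinearMap.ker (φ ∘ₗ (B i).subtype) := by
    contrapose! hY
    refine ht.isSimpleModule_of_modRad_le_ker hV hgen fun φ => hrad.trans (iSup_le fun i => ?_)
    rw [Submodule.map_le_iff_le_comap, ← LinearMap.ker_comp]
    exact hY i φ
  have hφinj := (hloc i).injective_of_not_modRad_le_ker (hlen i) hφ
  have : Nontrivial (B i) := not_subsingleton_iff_nontrivial.1 fun _ =>
    hφ fun x _ => by simp [Subsingleton.elim x 0]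
  have hφtop : LinearMap.range (φ ∘ₗ (B i).subtype) = ⊤ :=
    top_le_iff.1 (hgen ▸ iSup_le ((hinj i).range_le_range ht hφinj))
  exact ⟨i, ⟨.ofBijective _ ⟨hφinj, LinearMap.range_eq_top.1 hφtop⟩⟩⟩

lemma nonsimpleCocyclicsProjective_of_family (hloc : ∀ i, IsLocalModule A (B i))
    (hlen : ∀ i, HasLengthTwo A (B i)) (hinj : ∀ i, RelInjective A M (B i))
    (hproj : ∀ i, RelProjective A M (B i))
    (hrad : modRad A M ≤ ⨆ i, (modRad A (B i)).map (B i).subtype)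
    (hV : IsVModule A (M ⧸ modRad A M)) : NonsimpleCocyclicsProjective A M := by
  intro X _ _ hX s hs hXs
  obtain ⟨Y, _, _, j, hj, hjs, hgen⟩ := hX.exists_cocyclic_generated_hull hs
  have := hs.nontrivial
  have hY : ¬ IsSimpleModule A Y := fun _ => hXs (isSimpleModule_of_injective j hj)
  obtain ⟨i, ⟨e⟩⟩ := hjs.exists_linearEquiv hloc hlen hinj hrad hV hY hgen
  have hej : Function.Injective (e.symm.toLinearMap ∘ₗ j) := e.symm.injective.comp hj
  have hejs := (hloc i).surjective_of_injective (hlen i) hXs hej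
  have := (hloc i).finite
  have hBi := (hproj i).projInSigma ((InSigma.self A M).of_injective (B i).subtype_injective)
  exact hBi.of_equiv (LinearEquiv.ofBijective _ ⟨hej, hejs⟩).symm

end Converse

/-- Theorem 2.3: for a module `M`, TFAE: (1) `M` is an almost `V`-module; (2) every module
in `σ(M)` is a `V`-module or has a nonzero direct summand projective in `σ(M)`;
(3) there is an independent family of local submodules `Aᵢ`, each `M`-injective and
`M`-projective of length two, with `J(M) = ⊕ J(Aᵢ)` and `M/J(M)` a `V`-module. -/
theorem almostVModule_tfae (R : Type u) [Ring R] (M : Type v) [AddCommGroup M]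
    [Module Rᵐᵒᵖ M] :
    List.TFAE
      [ IsAlmostVModule Rᵐᵒᵖ M,
        ∀ (N : Type v) [AddCommGroup N] [Module Rᵐᵒᵖ N], InSigma Rᵐᵒᵖ M N →
          IsVModule Rᵐᵒᵖ N ∨
            ∃ D : Submodule Rᵐᵒᵖ N, D ≠ ⊥ ∧ IsDirectSummand Rᵐᵒᵖ D ∧
              ProjInSigma Rᵐᵒᵖ M ↥D,
        ∃ (ι : Type v) (A : ι → Submodule Rᵐᵒᵖ M), iSupIndep A ∧
          (∀ i, IsLocalModule Rᵐᵒᵖ ↥(A i) ∧ HasLengthTwo Rᵐᵒᵖ ↥(A i) ∧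
            RelInjective Rᵐᵒᵖ M ↥(A i) ∧ RelProjective Rᵐᵒᵖ M ↥(A i)) ∧
          (modRad Rᵐᵒᵖ M = ⨆ i, (modRad Rᵐᵒᵖ ↥(A i)).map (A i).subtype) ∧
          IsVModule Rᵐᵒᵖ (M ⧸ modRad Rᵐᵒᵖ M) ] := by
  have almost_iff : IsAlmostVModule Rᵐᵒᵖ M ↔ NonsimpleCocyclicsProjective Rᵐᵒᵖ M :=
    ⟨IsAlmostVModule.nonsimpleCocyclicsProjective, NonsimpleCocyclicsProjective.isAlmostVModule⟩
  tfae_have 1 → 2 := fun h _ _ _ => (almost_iff.1 h).isVModule_or_exists_summand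
  tfae_have 2 → 3 := fun h =>
    (nonsimpleCocyclicsProjective_of_isVModule_or_exists_summand h).exists_iSupIndep_family
  tfae_have 3 → 1 := by
    rintro ⟨ι, B, -, hB, hrad, hV⟩
    exact almost_iff.2 <| nonsimpleCocyclicsProjective_of_family (fun i => (hB i).1)
      (fun i => (hB i).2.1) (fun i => (hB i).2.2.1) (fun i => (hB i).2.2.2) hrad.le hV
  tfae_finish
end

section
/- Let R be a ring satisfying: (a) there exists a finite set {e_i}_{i∈I} of orthogonal idempotents of R such that each e_iR is a local injective right R-module of composition length two and J(R_R) = ⊕_{i∈I} J(e_iR); (b) R/J(R) is a right SV-ring and the Loewy length of R_R is at most 2; (c) R/SI(R_R) is a right artinian ring. Then every right R-module is a direct sum of an injective module and a V-module, and also a direct sum of a projective module and a V-module. -/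
universe u v w

/-- `SI(R_R)`: the sum of all simple injective submodules of the right regular module. -/
def SIdeal (R : Type u) [Ring R] : Submodule Rᵐᵒᵖ R :=
  sSup {T : Submodule Rᵐᵒᵖ R | IsAtom T ∧ Module.Injective Rᵐᵒᵖ ↥T}

/-- Condition (a): there is a finite set of orthogonal idempotents `eᵢ` such that each
`eᵢR` is a local injective right module of length two and `J(R_R) = ⊕ J(eᵢR)`. -/
def HypA (R : Type u) [Ring R] : Prop :=
  ∃ (n : ℕ) (e : Fin n → R),
    (∀ i, IsIdempotentElem (e i)) ∧
    (∀ i j, i ≠ j → e i * e j = 0) ∧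
    (∀ i, IsLocalModule Rᵐᵒᵖ ↥(Submodule.span Rᵐᵒᵖ ({e i} : Set R)) ∧
      Module.Injective Rᵐᵒᵖ ↥(Submodule.span Rᵐᵒᵖ ({e i} : Set R)) ∧
      HasLengthTwo Rᵐᵒᵖ ↥(Submodule.span Rᵐᵒᵖ ({e i} : Set R))) ∧
    iSupIndep (fun i => Submodule.span Rᵐᵒᵖ ({e i} : Set R)) ∧
    modRad Rᵐᵒᵖ R =
      ⨆ i, (modRad Rᵐᵒᵖ ↥(Submodule.span Rᵐᵒᵖ ({e i} : Set R))).map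
        (Submodule.span Rᵐᵒᵖ ({e i} : Set R)).subtype

/-- Condition (b): `R/J(R)` is a right `SV`-ring and the Loewy length of `R_R` is at
most `2` (i.e. `R/Soc(R_R)` is semisimple). -/
def HypB (R : Type u) [Ring R] : Prop :=
  (∃ c : RingCon R, (∀ x : R, c x 0 ↔ x ∈ modRad Rᵐᵒᵖ R) ∧
      IsSemiartinianModule (RingCon.Quotient c)ᵐᵒᵖ (RingCon.Quotient c) ∧
      IsVModule (RingCon.Quotient c)ᵐᵒᵖ (RingCon.Quotient c)) ∧
  IsSemisimpleModule Rᵐᵒᵖ (R ⧸ modSocle Rᵐᵒᵖ R)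

/-- Condition (c): `R/SI(R_R)` is a right artinian ring. -/
def HypC (R : Type u) [Ring R] : Prop :=
  ∃ c : RingCon R, (∀ x : R, c x 0 ↔ x ∈ SIdeal R) ∧
    IsArtinian (RingCon.Quotient c)ᵐᵒᵖ (RingCon.Quotient c)

/-!
Write `I = SI(R_R)` and let `K` be the sum of a maximal independent family of submodules of `M`
that are injective, projective and annihilated by `I`. Since `R / I` is right Noetherian, `K` is
injective, so `M = K ⊕ L`. A local injective submodule `E` of `R_R` of length two is projective,
being a summand of `R_R`, and receives only the zero map from a simple injective module, so
`E I = 0`; by maximality `E` does not embed in `L`. As every nonzero submodule of `E` contains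
`J(E)`, each map `E → L` kills `J(E)`. Hence `L J(R) = 0`, and `L` is a module over the right
`V`-ring `R / J(R)`.
-/

section CompleteLattice

variable {α : Type*} [CompleteLattice α] [IsModularLattice α]

theorem sSupIndep_insert {s : Set α} {a : α} (hs : sSupIndep s) (ha : Disjoint a (sSup s)) :
    sSupIndep (insert a s) := by
  rintro x hx
  by_cases hxa : x = a
  · subst hxa
    exact ha.mono_right (sSup_le_sSup (by simp))
  · have hxs : x ∈ s := hx.resolve_left hxa
    rw [Set.insert_sdiff_of_notMem _ (by simpa using Ne.symm hxa), sSup_insert, sup_comm]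
    refine (hs hxs).disjoint_sup_right_of_disjoint_sup_left (ha.symm.mono_left ?_)
    exact sup_le (le_sSup hxs) (sSup_le_sSup Set.sdiff_subset)

theorem exists_maximal_sSupIndep [IsCompactlyGenerated α] (C : Set α) :
    ∃ s ⊆ C, sSupIndep s ∧ ∀ a ∈ C, Disjoint a (sSup s) → a = ⊥ := by
  obtain ⟨s, ⟨hsC, hs⟩, hmax⟩ := zorn_subset {s : Set α | s ⊆ C ∧ sSupIndep s}
    fun c hc hchain => ⟨⋃₀ c, ⟨Set.sUnion_subset fun t ht => (hc ht).1,
      iSupIndep_sUnion_of_directed hchain.directedOn fun t ht => (hc ht).2⟩,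
      fun _ => Set.subset_sUnion_of_mem⟩
  refine ⟨s, hsC, hs, fun a ha hdisj => ?_⟩
  have has : a ∈ s := hmax ⟨Set.insert_subset ha hsC, sSupIndep_insert hs hdisj⟩
    (Set.subset_insert a s) (Set.mem_insert a s)
  exact disjoint_self.mp (hdisj.mono_right (le_sSup has))

end CompleteLattice

section InjectiveDecomposition

variable {A : Type*} [Ring A] {M : Type*} [AddCommGroup M] [Module A M]

theorem exists_isCompl_of_baer {K : Submodule A M} (hK : Module.Baer A K) :
    ∃ L, IsCompl K L := by
  obtain ⟨f, hf⟩ := hK.extension_property K.subtype K.injective_subtype LinearMap.id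
  exact ⟨LinearMap.ker f, LinearMap.isCompl_of_proj (LinearMap.congr_fun hf)⟩

theorem projective_of_baer [Module.Projective A M] {K : Submodule A M} (hK : Module.Baer A K) :
    Module.Projective A K := by
  obtain ⟨f, hf⟩ := hK.extension_property K.subtype K.injective_subtype LinearMap.id
  exact Module.Projective.of_split K.subtype f hf

theorem nonempty_dfinsupp_linearEquiv_sSup {s : Set (Submodule A M)} (hs : sSupIndep s) :
    Nonempty ((Π₀ N : s, (N : Submodule A M)) ≃ₗ[A] ↥(sSup s)) := by
  classical
  rw [sSup_eq_iSup', Submodule.iSup_eq_range_dfinsupp_lsum]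
  exact ⟨LinearEquiv.ofInjective _ ((sSupIndep_iff s).mp hs).dfinsupp_lsum_injective⟩

theorem fg_range_of_le_ker {N : Type*} [AddCommGroup N] [Module A N] (I : Submodule A M)
    [IsNoetherian A (M ⧸ I)] (K : Submodule A M) (f : K →ₗ[A] N)
    (hf : I.comap K.subtype ≤ LinearMap.ker f) : (LinearMap.range f).FG := by
  have : IsNoetherian A (K ⧸ I.comap K.subtype) := by
    refine isNoetherian_of_injective ((I.comap K.subtype).mapQ I K.subtype le_rfl) ?_
    rw [← LinearMap.ker_eq_bot]
    exact Submodule.ker_liftQ_eq_bot _ _ _ (by rw [LinearMap.ker_comp, Submodule.ker_mkQ])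
  rw [← Submodule.range_liftQ _ f hf, LinearMap.range_eq_map]
  exact (IsNoetherian.noetherian ⊤).map _

theorem exists_finset_forall_notMem_apply_eq_zero {ι : Type*} {N : ι → Type*}
    [∀ i, AddCommGroup (N i)] [∀ i, Module A (N i)] (f : M →ₗ[A] Π₀ i, N i)
    (hf : (LinearMap.range f).FG) : ∃ s : Finset ι, ∀ x, ∀ i ∉ s, f x i = 0 := by
  classical
  obtain ⟨t, ht⟩ := hf
  refine ⟨t.biUnion DFinsupp.support, fun x i hi => ?_⟩
  have hspan : Submodule.span A (t : Set (Π₀ i, N i)) ≤ LinearMap.ker (DFinsupp.lapply i) := by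
    refine Submodule.span_le.mpr fun d hd => ?_
    by_contra hne
    exact hi (Finset.mem_biUnion.mpr ⟨d, hd, by simpa using hne⟩)
  exact hspan (ht ▸ LinearMap.mem_range_self f x)

/- A map from a left ideal into `⨁ Nᵢ` vanishes on its intersection with `I`, so its range is
finitely generated and meets only finitely many summands. -/
theorem baer_dfinsupp (I : Ideal A) [IsNoetherian A (A ⧸ I)] {ι : Type*} {N : ι → Type*}
    [∀ i, AddCommGroup (N i)] [∀ i, Module A (N i)] (hN : ∀ i, Module.Baer A (N i))
    (hI : ∀ i, I ≤ Module.annihilator A (N i)) : Module.Baer A (Π₀ i, N i) := by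
  classical
  intro K f
  choose g hg using fun i => hN i K (DFinsupp.lapply i ∘ₗ f)
  have hker : Submodule.comap K.subtype I ≤ LinearMap.ker f := by
    refine fun x hx => DFinsupp.ext fun i => ?_
    have hzero : (x : A) • g i 1 = 0 := Module.mem_annihilator.mp (hI i hx) _
    rwa [← LinearMap.map_smul (g i), smul_eq_mul, mul_one, hg i x x.2] at hzero
  obtain ⟨s, hs⟩ := exists_finset_forall_notMem_apply_eq_zero f (fg_range_of_le_ker I K f hker)
  refine ⟨∑ i ∈ s, DFinsupp.lsingle i ∘ₗ g i, fun x hx => DFinsupp.ext fun i => ?_⟩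
  have hcomponent : ∀ j, (DFinsupp.single j (g j x)) i = if j = i then f ⟨x, hx⟩ i else 0 := by
    intro j
    split_ifs with hji
    · subst hji
      simpa using hg j x hx
    · exact DFinsupp.single_eq_of_ne (Ne.symm hji)
  simp only [LinearMap.sum_apply, LinearMap.comp_apply, DFinsupp.lsingle_apply,
    DFinsupp.finsetSum_apply, hcomponent, Finset.sum_ite_eq']
  exact ite_eq_left_iff.mpr fun hi => (hs ⟨x, hx⟩ i hi).symm

theorem exists_isCompl_baer_projective (I : Ideal A) [IsNoetherian A (A ⧸ I)] :
    ∃ K L : Submodule A M, IsCompl K L ∧ Module.Baer A K ∧ Module.Projective A K ∧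
      ∀ N ≤ L, Module.Baer A N → Module.Projective A N → I ≤ Module.annihilator A N → N = ⊥ := by
  obtain ⟨s, hsC, hs, hmax⟩ := exists_maximal_sSupIndep
    {N : Submodule A M | Module.Baer A N ∧ Module.Projective A N ∧ I ≤ Module.annihilator A N}
  obtain ⟨e⟩ := nonempty_dfinsupp_linearEquiv_sSup hs
  have hbaer : Module.Baer A ↥(sSup s) :=
    (baer_dfinsupp I (fun N : s => (hsC N.2).1) fun N => (hsC N.2).2.2).of_equiv e
  have : ∀ N : s, Module.Projective A (N : Submodule A M) := fun N => (hsC N.2).2.1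
  obtain ⟨L, hL⟩ := exists_isCompl_of_baer hbaer
  exact ⟨sSup s, L, hL, hbaer, .of_equiv e, fun N hNL hN hNP hNI =>
    hmax N ⟨hN, hNP, hNI⟩ (hL.disjoint.symm.mono_left hNL)⟩

end InjectiveDecomposition

section LocalModule

variable {A : Type*} [Ring A] {E : Type*} [AddCommGroup E] [Module A E]

theorem IsLocalModule.eq_top_or_eq_top_of_sup_eq_top (hE : IsLocalModule A E)
    {K L : Submodule A E} (h : K ⊔ L = ⊤) : K = ⊤ ∨ L = ⊤ := by
  obtain ⟨P, hP, hmax⟩ := hE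
  by_contra! hKL
  exact hP (top_le_iff.mp (h ▸ sup_le (hmax K hKL.1) (hmax L hKL.2)))

theorem IsLocalModule.eq_bot_or_eq_top_of_baer (hE : IsLocalModule A E) {K : Submodule A E}
    (hK : Module.Baer A K) : K = ⊥ ∨ K = ⊤ := by
  obtain ⟨L, hL⟩ := exists_isCompl_of_baer hK
  refine (hE.eq_top_or_eq_top_of_sup_eq_top hL.sup_eq_top).symm.imp_left fun h => ?_
  simpa [h] using hL.inf_eq_bot

theorem HasLengthTwo.not_isAtom_top (hE : HasLengthTwo A E) :
    ¬ IsAtom (⊤ : Submodule A E) := by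
  obtain ⟨S, hatom, hcoatom⟩ := hE
  exact fun htop => hatom.1 (htop.2 S hcoatom.lt_top)

theorem IsLocalModule.modRad_le_of_ne_bot (hlocal : IsLocalModule A E)
    (hlength : HasLengthTwo A E) {K : Submodule A E} (hK : K ≠ ⊥) : modRad A E ≤ K := by
  obtain ⟨S, hatom, hcoatom⟩ := hlength
  refine (sInf_le hcoatom : modRad A E ≤ S).trans ?_
  by_cases hKS : K ≤ S
  · exact (hatom.le_iff_eq hK).mp hKS |>.ge
  · have htop : S ⊔ K = ⊤ := hcoatom.2 _ (left_lt_sup.mpr hKS)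
    rw [(hlocal.eq_top_or_eq_top_of_sup_eq_top htop).resolve_left hcoatom.1]
    exact le_top

theorem IsLocalModule.eq_zero_of_baer_of_isSimpleModule (hlocal : IsLocalModule A E)
    (hlength : HasLengthTwo A E) {T : Type*} [AddCommGroup T] [Module A T] [IsSimpleModule A T]
    (hT : Module.Baer A T) (f : T →ₗ[A] E) : f = 0 := by
  refine f.injective_or_eq_zero.resolve_left fun hf => ?_
  let e := LinearEquiv.ofInjective f hf
  have hatom : IsAtom (LinearMap.range f) :=
    isSimpleModule_iff_isAtom.mp (IsSimpleModule.congr e.symm)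
  have htop : LinearMap.range f = ⊤ :=
    (hlocal.eq_bot_or_eq_top_of_baer (hT.of_equiv e)).resolve_left hatom.1
  exact hlength.not_isAtom_top (htop ▸ hatom)

end LocalModule

section VModule

variable {A : Type*} [Ring A] {M : Type*} [AddCommGroup M] [Module A M]

theorem isVModule_iff_exists_isCoatom :
    IsVModule A M ↔
      ∀ (N : Submodule A M) (x : M), x ∉ N → ∃ P, IsCoatom P ∧ N ≤ P ∧ x ∉ P := by
  constructor
  · intro h N x hx
    obtain ⟨S, hS, rfl⟩ := h N fun htop => hx (htop ▸ Submodule.mem_top)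
    obtain ⟨P, hP, hxP⟩ : ∃ P ∈ S, x ∉ P := by simpa [Submodule.mem_sInf] using hx
    exact ⟨P, hS P hP, sInf_le hP, hxP⟩
  · refine fun h N _ => ⟨{P | IsCoatom P ∧ N ≤ P}, fun P hP => hP.1,
      le_antisymm (le_sInf fun P hP => hP.2) fun x hx => ?_⟩
    by_contra hxN
    obtain ⟨P, hP, hNP, hxP⟩ := h N x hxN
    exact hxP (Submodule.mem_sInf.mp hx P ⟨hP, hNP⟩)

theorem IsVModule.of_surjective {N : Type*} [AddCommGroup N] [Module A N] (hM : IsVModule A M)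
    (f : M →ₗ[A] N) (hf : Function.Surjective f) : IsVModule A N := by
  rw [isVModule_iff_exists_isCoatom] at hM ⊢
  intro K y hy
  obtain ⟨x, rfl⟩ := hf y
  obtain ⟨P, hP, hKP, hxP⟩ := hM (K.comap f) x hy
  have hker : LinearMap.ker f ≤ P := (Submodule.comap_mono bot_le).trans hKP
  refine ⟨P.map f, Submodule.isCoatom_map_of_ker_le hf hker hP, ?_, ?_⟩
  · simpa [Submodule.map_comap_eq_of_surjective hf] using Submodule.map_mono (f := f) hKP
  · rwa [← Submodule.mem_comap, Submodule.comap_map_eq_self hker]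

theorem IsVModule.of_bijective {B : Type*} [Ring B] {σ : A →+* B} [RingHomSurjective σ]
    {N : Type*} [AddCommGroup N] [Module B N] (hN : IsVModule B N) (f : M →ₛₗ[σ] N)
    (hf : Function.Bijective f) : IsVModule A M := by
  rw [isVModule_iff_exists_isCoatom] at hN ⊢
  intro K x hx
  have hfx : f x ∉ K.map f := by
    rintro ⟨z, hz, hzx⟩
    exact hx (hf.1 hzx ▸ hz)
  obtain ⟨P, hP, hKP, hxP⟩ := hN (K.map f) (f x) hfx
  exact ⟨P.comap f, (Submodule.isCoatom_comap_iff hf.2).mpr hP,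
    Submodule.map_le_iff_le_comap.mp hKP, hxP⟩

theorem exists_maximal_le_notMem {N : Submodule A M} {x : M} (hx : x ∉ N) :
    ∃ P, N ≤ P ∧ Maximal (x ∉ ·) P := by
  refine zorn_le_nonempty₀ {P : Submodule A M | x ∉ P} (fun c hc hchain P hP => ?_) N hx
  refine ⟨sSup c, fun hxc => ?_, fun Q hQ => le_sSup hQ⟩
  obtain ⟨Q, hQ, hxQ⟩ := (Submodule.mem_sSup_of_directed ⟨P, hP⟩ hchain.directedOn).mp hxc
  exact hc hQ hxQ

theorem exists_sub_smul_mem_of_maximal_notMem {P : Submodule A M} {x y : M}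
    (hP : Maximal (x ∉ ·) P) (hy : y ∉ P) : ∃ a : A, x - a • y ∈ P := by
  have hlt : P < P ⊔ A ∙ y :=
    left_lt_sup.mpr fun h => hy (h (Submodule.mem_span_singleton_self y))
  have hx : x ∈ P ⊔ A ∙ y := not_not.mp (hP.not_prop_of_gt hlt)
  obtain ⟨p, hp, z, hz, rfl⟩ := Submodule.mem_sup.mp hx
  obtain ⟨a, rfl⟩ := Submodule.mem_span_singleton.mp hz
  exact ⟨a, by simpa using hp⟩

/- For `y ∉ P`, write `x = a • y + p` with `p ∈ P`. A maximal submodule `W` of `A ∙ y` containing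
`P ∩ (A ∙ y)` but not `a • y` lies in `P` by the maximality of `P`, while any `Q > P` contains
`a • y` and hence `W + A(a • y) = A ∙ y`. -/
theorem isCoatom_of_maximal_notMem (hM : ∀ y : M, IsVModule A (A ∙ y)) {P : Submodule A M}
    {x : M} (hP : Maximal (x ∉ ·) P) : IsCoatom P := by
  refine ⟨fun h => hP.prop (h ▸ Submodule.mem_top), fun Q hPQ =>
    Submodule.eq_top_iff'.mpr fun y => ?_⟩
  by_cases hy : y ∈ P
  · exact hPQ.le hy
  obtain ⟨a, hxa⟩ := exists_sub_smul_mem_of_maximal_notMem hP hy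
  let y' : A ∙ y := ⟨y, Submodule.mem_span_singleton_self y⟩
  have hay : a • y ∉ P := fun h => hP.prop ((P.sub_mem_iff_left h).mp hxa)
  obtain ⟨W, hW, hPW, haW⟩ :=
    isVModule_iff_exists_isCoatom.mp (hM y) (P.comap (A ∙ y).subtype) (a • y') hay
  have hWP : W ≤ P.comap (A ∙ y).subtype := by
    intro w hw
    by_contra hwP
    obtain ⟨b, hxb⟩ := exists_sub_smul_mem_of_maximal_notMem hP hwP
    have hdiff : a • y' - b • w ∈ W :=
      hPW (by simpa [y'] using P.sub_mem hxb hxa)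
    exact haW ((W.sub_mem_iff_left (W.smul_mem b hw)).mp hdiff)
  have haQ : a • y' ∈ Q.comap (A ∙ y).subtype :=
    (Q.sub_mem_iff_right (not_not.mp (hP.not_prop_of_gt hPQ))).mp (hPQ.le hxa)
  have htop : Q.comap (A ∙ y).subtype = ⊤ :=
    hW.2 _ (lt_of_le_of_ne (hWP.trans (Submodule.comap_mono hPQ.le)) fun h => haW (h ▸ haQ))
  exact (htop ▸ Submodule.mem_top : y' ∈ Q.comap (A ∙ y).subtype)

theorem IsVModule.of_forall_span_singleton (hM : ∀ y : M, IsVModule A (A ∙ y)) :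
    IsVModule A M := by
  refine isVModule_iff_exists_isCoatom.mpr fun N x hx => ?_
  obtain ⟨P, hNP, hP⟩ := exists_maximal_le_notMem hx
  exact ⟨P, isCoatom_of_maximal_notMem hM hP, hNP, hP.prop⟩

theorem IsVModule.of_le_annihilator {I : Ideal A} (hV : IsVModule A (A ⧸ I))
    (hI : I ≤ Module.annihilator A M) : IsVModule A M := by
  refine .of_forall_span_singleton fun y => ?_
  have hker : I ≤ LinearMap.ker (LinearMap.toSpanSingleton A M y) := fun a ha =>
    Module.mem_annihilator.mp (hI ha) y
  rw [← LinearMap.range_toSpanSingleton, ← Submodule.range_liftQ I _ hker]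
  exact hV.of_surjective _ (LinearMap.surjective_rangeRestrict _)

end VModule

section RightModule

variable {R : Type*} [Ring R]

/-- The identification of the right module `R_R` with the left regular module over `Rᵐᵒᵖ`, through
which right ideals of `R` become left ideals of `Rᵐᵒᵖ`. -/
def opSelfEquiv (R : Type*) [Ring R] : R ≃ₗ[Rᵐᵒᵖ] Rᵐᵒᵖ :=
  MulOpposite.opLinearEquiv Rᵐᵒᵖ

theorem projective_right_self : Module.Projective Rᵐᵒᵖ R :=
  .of_equiv (opSelfEquiv R).symm

theorem isNoetherian_right_self_of_isArtinian [IsArtinian Rᵐᵒᵖ R] : IsNoetherian Rᵐᵒᵖ R := by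
  have : IsArtinianRing Rᵐᵒᵖ := isArtinian_of_linearEquiv (opSelfEquiv R)
  exact isNoetherian_of_linearEquiv (opSelfEquiv R).symm

theorem map_opSelfEquiv_le_annihilator {I : Submodule Rᵐᵒᵖ R} {N : Type*} [AddCommGroup N]
    [Module Rᵐᵒᵖ N] (h : ∀ f : R →ₗ[Rᵐᵒᵖ] N, I ≤ LinearMap.ker f) :
    I.map (opSelfEquiv R).toLinearMap ≤ Module.annihilator Rᵐᵒᵖ N := by
  rintro _ ⟨x, hx, rfl⟩
  exact Module.mem_annihilator.mpr fun n =>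
    h (LinearMap.toSpanSingleton Rᵐᵒᵖ N n ∘ₗ (opSelfEquiv R).toLinearMap) hx

theorem sIdeal_le_ker {E : Type*} [AddCommGroup E] [Module Rᵐᵒᵖ E]
    (hlocal : IsLocalModule Rᵐᵒᵖ E) (hlength : HasLengthTwo Rᵐᵒᵖ E) (f : R →ₗ[Rᵐᵒᵖ] E) :
    SIdeal R ≤ LinearMap.ker f := by
  refine sSup_le fun T hT => ?_
  have : IsSimpleModule Rᵐᵒᵖ T := isSimpleModule_iff_isAtom.mpr hT.1
  have hzero : f ∘ₗ T.subtype = 0 :=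
    hlocal.eq_zero_of_baer_of_isSimpleModule hlength (Module.Baer.of_injective hT.2) _
  exact fun x hx => LinearMap.congr_fun hzero ⟨x, hx⟩

end RightModule

section RingCon

variable {R : Type*} [Ring R] (c : RingCon R)

instance ringHomSurjective_op_mk' : RingHomSurjective (RingHom.op c.mk') where
  is_surjective := by
    intro y
    obtain ⟨x, hx⟩ := c.mk'_surjective y.unop
    exact ⟨MulOpposite.op x, MulOpposite.unop_injective hx⟩

/-- The quotient map `R → R / c` of right modules, semilinear over the quotient map of opposite
rings. -/
def rightQuotientMap : R →ₛₗ[RingHom.op c.mk'] c.Quotient where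
  toFun := c.mk'
  map_add' := map_add c.mk'
  map_smul' a x := map_mul c.mk' x a.unop

theorem exists_bijective_right_quotient {I : Submodule Rᵐᵒᵖ R} (hI : ∀ x, c x 0 ↔ x ∈ I) :
    ∃ f : R ⧸ I →ₛₗ[RingHom.op c.mk'] c.Quotient, Function.Bijective f := by
  have hker : LinearMap.ker (rightQuotientMap c) = I := by
    ext x
    exact (RingCon.eq c).trans (hI x)
  refine ⟨I.liftQ (rightQuotientMap c) hker.ge, ?_, fun y => ?_⟩
  · exact LinearMap.ker_eq_bot.mp (Submodule.ker_liftQ_eq_bot _ _ _ hker.le)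
  · obtain ⟨x, rfl⟩ := c.mk'_surjective y
    exact ⟨I.mkQ x, rfl⟩

variable {c}

theorem isNoetherian_right_quotient_of_isArtinian {I : Submodule Rᵐᵒᵖ R}
    (hI : ∀ x, c x 0 ↔ x ∈ I) [IsArtinian c.Quotientᵐᵒᵖ c.Quotient] :
    IsNoetherian Rᵐᵒᵖ (R ⧸ I) := by
  obtain ⟨f, hf⟩ := exists_bijective_right_quotient c hI
  exact (LinearMap.isNoetherian_iff_of_bijective f hf).mpr isNoetherian_right_self_of_isArtinian

theorem isVModule_right_quotient {I : Submodule Rᵐᵒᵖ R} (hI : ∀ x, c x 0 ↔ x ∈ I)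
    (hV : IsVModule c.Quotientᵐᵒᵖ c.Quotient) : IsVModule Rᵐᵒᵖ (R ⧸ I) := by
  obtain ⟨f, hf⟩ := exists_bijective_right_quotient c hI
  exact hV.of_bijective f hf

end RingCon

section Decomposition

variable {R : Type u} [Ring R]

theorem isVModule_of_forall_le_ker {J : Submodule Rᵐᵒᵖ R} (hV : IsVModule Rᵐᵒᵖ (R ⧸ J))
    {N : Type*} [AddCommGroup N] [Module Rᵐᵒᵖ N]
    (hN : ∀ f : R →ₗ[Rᵐᵒᵖ] N, J ≤ LinearMap.ker f) : IsVModule Rᵐᵒᵖ N := by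
  let e := Submodule.Quotient.equiv J _ (opSelfEquiv R) rfl
  exact (hV.of_surjective e.toLinearMap e.surjective).of_le_annihilator
    (map_opSelfEquiv_le_annihilator hN)

theorem exists_isCompl_baer_projective_modRad_le_ker [IsNoetherian Rᵐᵒᵖ (R ⧸ SIdeal R)]
    (M : Type*) [AddCommGroup M] [Module Rᵐᵒᵖ M] :
    ∃ K L : Submodule Rᵐᵒᵖ M, IsCompl K L ∧ Module.Baer Rᵐᵒᵖ K ∧ Module.Projective Rᵐᵒᵖ K ∧
      ∀ E : Submodule Rᵐᵒᵖ R, IsLocalModule Rᵐᵒᵖ E → HasLengthTwo Rᵐᵒᵖ E →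
        Module.Baer Rᵐᵒᵖ E → ∀ f : E →ₗ[Rᵐᵒᵖ] L, modRad Rᵐᵒᵖ E ≤ LinearMap.ker f := by
  let I : Ideal Rᵐᵒᵖ := (SIdeal R).map (opSelfEquiv R).toLinearMap
  have : IsNoetherian Rᵐᵒᵖ (Rᵐᵒᵖ ⧸ I) :=
    isNoetherian_of_linearEquiv (Submodule.Quotient.equiv (SIdeal R) I (opSelfEquiv R) rfl)
  obtain ⟨K, L, hKL, hKB, hKP, hmax⟩ := exists_isCompl_baer_projective (M := M) I
  refine ⟨K, L, hKL, hKB, hKP, fun E hlocal hlength hE f => ?_⟩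
  by_cases hker : LinearMap.ker f = ⊥
  · let g : E →ₗ[Rᵐᵒᵖ] M := L.subtype ∘ₗ f
    let e := LinearEquiv.ofInjective g (L.injective_subtype.comp (LinearMap.ker_eq_bot.mp hker))
    have := projective_right_self (R := R)
    have : Module.Projective Rᵐᵒᵖ E := projective_of_baer hE
    have hann : I ≤ Module.annihilator Rᵐᵒᵖ (LinearMap.range g) :=
      e.annihilator_eq ▸ map_opSelfEquiv_le_annihilator (sIdeal_le_ker hlocal hlength)
    have hrange : LinearMap.range g ≤ L := by
      rintro _ ⟨z, rfl⟩
      exact (f z).2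
    have hg : g = 0 :=
      LinearMap.range_eq_bot.mp (hmax _ hrange (hE.of_equiv e) (.of_equiv e) hann)
    exact fun z _ => Subtype.ext (LinearMap.congr_fun hg z)
  · exact hlocal.modRad_le_of_ne_bot hlength hker

theorem lemma31_decompositions_general {ι : Type*} (E : ι → Submodule Rᵐᵒᵖ R)
    (hlocal : ∀ i, IsLocalModule Rᵐᵒᵖ (E i)) (hinj : ∀ i, Module.Injective Rᵐᵒᵖ (E i))
    (hlength : ∀ i, HasLengthTwo Rᵐᵒᵖ (E i))
    (hrad : modRad Rᵐᵒᵖ R ≤ ⨆ i, (modRad Rᵐᵒᵖ (E i)).map (E i).subtype)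
    (hV : IsVModule Rᵐᵒᵖ (R ⧸ modRad Rᵐᵒᵖ R)) [IsNoetherian Rᵐᵒᵖ (R ⧸ SIdeal R)]
    (M : Type v) [AddCommGroup M] [Module Rᵐᵒᵖ M] :
    ∃ K L : Submodule Rᵐᵒᵖ M, IsCompl K L ∧ Module.Injective Rᵐᵒᵖ K ∧
      Module.Projective Rᵐᵒᵖ K ∧ IsVModule Rᵐᵒᵖ L := by
  obtain ⟨K, L, hKL, hKB, hKP, hL⟩ := exists_isCompl_baer_projective_modRad_le_ker (R := R) M
  refine ⟨K, L, hKL, hKB.injective, hKP, isVModule_of_forall_le_ker hV fun f => ?_⟩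
  refine hrad.trans (iSup_le fun i => Submodule.map_le_iff_le_comap.mpr ?_)
  exact hL (E i) (hlocal i) (hlength i) (.of_injective (hinj i)) (f ∘ₗ (E i).subtype)

end Decomposition

/-- Lemma 3.1 (2), (3): under conditions (a), (b), (c) every right `R`-module is a direct
sum of an injective module and a `V`-module, and also a direct sum of a projective module
and a `V`-module. -/
theorem lemma31_decompositions (R : Type u) [Ring R]
    (hA : HypA R) (hB : HypB R) (hC : HypC R) :
    ∀ (M : Type v) [AddCommGroup M] [Module Rᵐᵒᵖ M],
      (∃ K L : Submodule Rᵐᵒᵖ M, IsCompl K L ∧ Module.Injective Rᵐᵒᵖ ↥K ∧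
        IsVModule Rᵐᵒᵖ ↥L) ∧
      (∃ K L : Submodule Rᵐᵒᵖ M, IsCompl K L ∧ Module.Projective Rᵐᵒᵖ ↥K ∧
        IsVModule Rᵐᵒᵖ ↥L) := by
  intro M _ _
  obtain ⟨n, e, -, -, hE, -, hrad⟩ := hA
  obtain ⟨⟨c, hc, -, hV⟩, -⟩ := hB
  obtain ⟨d, hd, hartinian⟩ := hC
  have := isNoetherian_right_quotient_of_isArtinian hd
  obtain ⟨K, L, hKL, hKI, hKP, hL⟩ := lemma31_decompositions_general
    (fun i => Submodule.span Rᵐᵒᵖ {e i}) (fun i => (hE i).1) (fun i => (hE i).2.1)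
    (fun i => (hE i).2.2) hrad.le (isVModule_right_quotient hc hV) M
  exact ⟨⟨K, L, hKL, hKI, hL⟩, ⟨K, L, hKL, hKP, hL⟩⟩
end
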